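/- arXiv:1801.08778 — 2 statements merged into one kernel-verified Lean document; each statement's English description precedes it below -/
import Mathlib

section
/- Let k ≥ 1 with n_k > 2. Then for every L with |p_{k−1}| + 2 ≤ L ≤ |p_k| + 1, the complexity is C(L) = (|p_{k−1}| + 1) + (#A_k − 1)·L + T(L), where T(L) = 𝟙_{A_k}(a_{k−1})·(L − 2|p_{k−1}| + |p_{k−2}| − 1) if |p_{k−1}| + 2 ≤ L ≤ 2|p_{k−1}| − |p_{k−2}| + 1; T(L) = 0 if 2|p_{k−1}| − |p_{k−2}| + 2 ≤ L ≤ |p_k| − |p_{k−1}|; and T(L) = −𝟙[a_k ∉ A_{k+1}]·(L − |p_k| + |p_{k−1}|) if |p_k| − |p_{k−1}| + 1 ≤ L ≤ |p_k| + 1 (the arithmetic being carried out in ℤ). -/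
/-!
Extend the coding to the two-sided sequence carrying `a i` at the integers `y` for which `i` is
maximal with `n 0 ⋯ n (i - 1) ∣ y`, and an arbitrary letter `b` at `0`. Put `q' = |p (k - 2)| + 1`,
`q = |p (k - 1)| + 1` and `N = |p k| + 1`. If `q ≤ L ≤ N`, a word of length `L` has at most one
multiple of `N` among its positions; if it has none, its multiples of `q` all carry `a k`. Moving
that multiple of `N`, respectively some multiple of `q`, to `0` shows that the word is determined by
a letter `b` of `A_k` and by the index `j` of the position `0`.

Two words with `L ≥ q` can only agree if their phases agree modulo `q'`, since otherwise one word
carries `a i` where the other carries `a (i + 1)`. Hence distinct pairs `(b, j)` give the same word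
in two cases only: `b = a k` and `j` agrees modulo `q`, or `b = a (k - 1)`, the marked position is
the only multiple of `q` in the word, and `j` agrees modulo `q'`. Each letter of `A_k` thus
contributes `L` words, except that `a k` contributes `q`, or fewer if it does not occur again and
`L > N - q`, and that `a (k - 1)`, if it occurs, loses `2 q - q' - L` words while this is positive.
-/

open Filter

/-- The blocks `p k` of the simple Toeplitz subshift coded by `a` and `n`:
`p 0 = a 0 ^ (n 0 - 1)` and `p (k+1)` consists of `n (k+1)` copies of `p k`
separated by `n (k+1) - 1` single letters `a (k+1)`. -/
def ToeplitzBlock {A : Type*} (a : ℕ → A) (n : ℕ → ℕ) : ℕ → List A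
  | 0 => List.replicate (n 0 - 1) (a 0)
  | k + 1 => List.intercalate [a (k + 1)] (List.replicate (n (k + 1)) (ToeplitzBlock a n k))

/-- `lenPrev a n k = |p (k-1)|`, with the convention `|p (-1)| = 0`. -/
def lenPrev {A : Type*} (a : ℕ → A) (n : ℕ → ℕ) : ℕ → ℕ
  | 0 => 0
  | k + 1 => (ToeplitzBlock a n k).length

/-- The language of the simple Toeplitz subshift: all finite words occurring as a
factor of some block `p k`. -/
def ToeplitzLang {A : Type*} (a : ℕ → A) (n : ℕ → ℕ) : Set (List A) :=
  {u | ∃ k, u <:+: ToeplitzBlock a n k}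

/-- The complexity function `C L`. -/
noncomputable def cmpl {A : Type*} (a : ℕ → A) (n : ℕ → ℕ) (L : ℕ) : ℕ :=
  Set.ncard {u | u ∈ ToeplitzLang a n ∧ u.length = L}

/-- The palindrome complexity function `P L`. -/
noncomputable def palCmpl {A : Type*} (a : ℕ → A) (n : ℕ → ℕ) (L : ℕ) : ℕ :=
  Set.ncard {u | u ∈ ToeplitzLang a n ∧ u.length = L ∧ u.reverse = u}

/-- `Ak a k = {a j : j ≥ k}`. -/
def Ak {A : Type*} (a : ℕ → A) (k : ℕ) : Set A := {x | ∃ j, k ≤ j ∧ a j = x}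

/-- The eventual alphabet `A_ev = ⋂ k, A_k`. -/
def Aev {A : Type*} (a : ℕ → A) : Set A := ⋂ k, Ak a k

/-- `Kf a k = min {j > k : {a (k+1), …, a j} = A (k+1)}`. -/
noncomputable def Kf {A : Type*} (a : ℕ → A) (k : ℕ) : ℕ :=
  sInf {j | k < j ∧ {x | ∃ i, k + 1 ≤ i ∧ i ≤ j ∧ a i = x} = Ak a (k + 1)}

/-- The positions `m i` at which `Kf` increases: `m 0 = 0` and
`m (i+1) = min {j > m i : Kf j > Kf (m i)}`. -/
noncomputable def mseq {A : Type*} (a : ℕ → A) : ℕ → ℕ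
  | 0 => 0
  | i + 1 => sInf {j | mseq a i < j ∧ Kf a (mseq a i) < Kf a j}

/-- The repetitivity function `R L`: the least `L'` such that every word of
length `L` of the language is a factor of every word of length `L'`. -/
noncomputable def repet {A : Type*} (a : ℕ → A) (n : ℕ → ℕ) (L : ℕ) : ℕ :=
  sInf {L' | ∀ u ∈ ToeplitzLang a n, u.length = L →
    ∀ w ∈ ToeplitzLang a n, w.length = L' → u <:+: w}

namespace SimpleToeplitz

variable {A : Type*} {a : ℕ → A} {n : ℕ → ℕ}

/-- The word `x y, x (y + 1), …, x (y + L - 1)` of a bi-infinite sequence `x`. -/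
def window (x : ℤ → A) (y : ℤ) (L : ℕ) : List A := (List.range L).map fun t : ℕ => x (y + t)

@[simp]
lemma length_window (x : ℤ → A) (y : ℤ) (L : ℕ) : (window x y L).length = L := by
  simp [window]

lemma window_eq_window_iff {x x' : ℤ → A} {y y' : ℤ} {L : ℕ} :
    window x y L = window x' y' L ↔ ∀ t < L, x (y + t) = x' (y' + t) := by
  simp [window]

lemma window_add (x : ℤ → A) (y : ℤ) (L M : ℕ) :
    window x y (L + M) = window x y L ++ window x (y + L) M := by
  simp [window, List.range_add, add_assoc, Function.comp_def]

lemma window_one (x : ℤ → A) (y : ℤ) : window x y 1 = [x y] := by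
  simp [window]

lemma infix_window_iff {x : ℤ → A} {y : ℤ} {M : ℕ} {u : List A} :
    u <:+: window x y M ↔ ∃ i : ℕ, i + u.length ≤ M ∧ window x (y + i) u.length = u := by
  constructor
  · rintro ⟨v, w, h⟩
    have hM : v.length + u.length + w.length = M := by
      simpa [add_assoc] using congrArg List.length h
    rw [← hM, window_add, window_add] at h
    exact ⟨v.length, by omega, (List.append_inj (List.append_inj h (by simp)).1 (by simp)).2.symm⟩
  · rintro ⟨i, hi, hu⟩
    obtain ⟨r, rfl⟩ := Nat.exists_eq_add_of_le hi
    rw [window_add, window_add, hu]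
    exact ⟨_, _, rfl⟩

lemma window_eq_intercalate {x : ℤ → A} {y : ℤ} {w : List A} {c : A} {p m : ℕ}
    (hw : ∀ r ≤ m, window x (y + (p + 1) * r) p = w)
    (hc : ∀ r < m, x (y + (p + 1) * r + p) = c) :
    window x y ((p + 1) * m + p) = List.intercalate [c] (List.replicate (m + 1) w) := by
  induction m generalizing y with
  | zero => simpa using hw 0 le_rfl
  | succ m ih =>
    have hw₀ : window x y p = w := by simpa using hw 0 (Nat.zero_le _)
    have hc₀ : x (y + p) = c := by simpa using hc 0 (Nat.succ_pos _)
    have htail : window x (y + p + 1) ((p + 1) * m + p) =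
        List.intercalate [c] (List.replicate (m + 1) w) := by
      refine ih (fun r hr => ?_) (fun r hr => ?_)
      · rw [← hw (r + 1) (by omega)]
        push_cast
        ring_nf
      · rw [← hc (r + 1) (by omega)]
        push_cast
        ring_nf
    have hlen : (p + 1) * (m + 1) + p = p + 1 + ((p + 1) * m + p) := by ring
    rw [List.replicate_succ, List.replicate_succ, List.intercalate_cons_cons,
      ← List.replicate_succ, ← htail, hlen, window_add, window_add, window_one, hw₀, hc₀]
    push_cast
    rw [add_assoc y]

/-! ### Scales and orders of positions -/

/-- The scales `n 0 * ⋯ * n (k - 1)`, so that `|p (k - 1)| + 1 = scale n k` for every `k ≥ 0`. -/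
def scale (n : ℕ → ℕ) (k : ℕ) : ℕ := ∏ i ∈ Finset.range k, n i

lemma scale_succ (n : ℕ → ℕ) (k : ℕ) : scale n (k + 1) = scale n k * n k :=
  Finset.prod_range_succ n k

lemma scale_dvd_scale {i j : ℕ} (h : i ≤ j) : (scale n i : ℤ) ∣ scale n j :=
  Int.natCast_dvd_natCast.2 <| Finset.prod_dvd_prod_of_subset _ _ _ (Finset.range_mono h)

lemma scale_pos (hn : ∀ k, 2 ≤ n k) (k : ℕ) : 0 < scale n k :=
  Finset.prod_pos fun i _ => two_pos.trans_le (hn i)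

lemma two_mul_scale_le (hn : ∀ k, 2 ≤ n k) (k : ℕ) : 2 * scale n k ≤ scale n (k + 1) := by
  rw [scale_succ, mul_comm]
  exact Nat.mul_le_mul_left _ (hn k)

lemma scale_mono (hn : ∀ k, 2 ≤ n k) : Monotone (scale n) :=
  monotone_nat_of_le_succ fun k => by have := two_mul_scale_le hn k; omega

lemma lt_scale (hn : ∀ k, 2 ≤ n k) (k : ℕ) : k < scale n k := by
  induction k with
  | zero => exact scale_pos hn 0
  | succ k ih => have := two_mul_scale_le hn k; omega

/-- The order of a position `y` is the largest `i` for which `scale n i` divides `y`; it is the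
level of the construction at which `y` gets its letter, namely `a i`. -/
def HasOrder (n : ℕ → ℕ) (i : ℕ) (y : ℤ) : Prop :=
  (scale n i : ℤ) ∣ y ∧ ¬(scale n (i + 1) : ℤ) ∣ y

lemma HasOrder.ne_zero {i : ℕ} {y : ℤ} (h : HasOrder n i y) : y ≠ 0 :=
  fun hy => h.2 (hy ▸ dvd_zero _)

lemma HasOrder.le {i j : ℕ} {y : ℤ} (h : HasOrder n j y) (hi : (scale n i : ℤ) ∣ y) : i ≤ j := by
  by_contra! hlt
  exact h.2 ((scale_dvd_scale hlt).trans hi)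

lemma HasOrder.unique {i j : ℕ} {y : ℤ} (h : HasOrder n i y) (h' : HasOrder n j y) : i = j :=
  (h'.le h.1).antisymm (h.le h'.1)

lemma hasOrder_of_pos_of_lt {i : ℕ} {y : ℤ} (h : (scale n i : ℤ) ∣ y) (hy : 0 < y)
    (hlt : y < scale n (i + 1)) : HasOrder n i y :=
  ⟨h, fun hd => (Int.le_of_dvd hy hd).not_gt hlt⟩

lemma hasOrder_scale (hn : ∀ k, 2 ≤ n k) (i : ℕ) : HasOrder n i (scale n i) := by
  have := scale_pos hn i
  have := two_mul_scale_le hn i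
  exact hasOrder_of_pos_of_lt dvd_rfl (by omega) (by omega)

lemma exists_hasOrder_lt {i : ℕ} {y : ℤ} (h : ¬(scale n i : ℤ) ∣ y) : ∃ j < i, HasOrder n j y := by
  induction i with
  | zero => simp [scale] at h
  | succ i ih =>
    by_cases hi : (scale n i : ℤ) ∣ y
    · exact ⟨i, i.lt_succ_self, hi, h⟩
    · obtain ⟨j, hj, hy⟩ := ih hi
      exact ⟨j, hj.trans i.lt_succ_self, hy⟩

lemma exists_hasOrder (hn : ∀ k, 2 ≤ n k) {y : ℤ} (hy : y ≠ 0) : ∃ i, HasOrder n i y := by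
  have hlt := lt_scale hn y.natAbs
  obtain ⟨i, -, hi⟩ := exists_hasOrder_lt (n := n) (i := y.natAbs) fun hd =>
    hy (Int.eq_zero_of_abs_lt_dvd hd (by rw [Int.abs_eq_natAbs]; exact_mod_cast hlt))
  exact ⟨i, hi⟩

lemma HasOrder.of_modEq {i j : ℕ} {y y' : ℤ} (hy : HasOrder n j y) (hj : j ≤ i)
    (h : y ≡ y' [ZMOD scale n i]) (hy' : ¬(scale n (i + 1) : ℤ) ∣ y') : HasOrder n j y' := by
  refine ⟨((h.of_dvd (scale_dvd_scale hj)).dvd_iff).1 hy.1, fun hd => ?_⟩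
  rcases hj.eq_or_lt with rfl | hlt
  · exact hy' hd
  · exact hy.2 (((h.of_dvd (scale_dvd_scale hlt)).dvd_iff).2 hd)

lemma exists_lt_dvd_add {q : ℕ} (hq : 0 < q) (y : ℤ) : ∃ t < q, (q : ℤ) ∣ y + t := by
  obtain ⟨t, ht, hty⟩ := Int.existsUnique_equiv_nat (-y) (Int.natCast_pos.2 hq)
  exact ⟨t, by omega, by simpa [add_comm] using hty.symm.dvd⟩

lemma exists_lt_hasOrder_add (hn : ∀ k, 2 ≤ n k) (i : ℕ) (y : ℤ) :
    ∃ t < scale n (i + 1), HasOrder n i (y + t) := by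
  obtain ⟨t, ht, hd⟩ := exists_lt_dvd_add (scale_pos hn (i + 1)) (y - scale n i)
  have hmod : (scale n i : ℤ) ≡ y + t [ZMOD scale n (i + 1)] :=
    Int.modEq_iff_dvd.2 (by rwa [add_sub_right_comm])
  obtain ⟨h, h'⟩ := hasOrder_scale hn i
  exact ⟨t, ht, ((hmod.of_dvd (scale_dvd_scale i.le_succ)).dvd_iff).1 h,
    fun hd => h' (hmod.dvd_iff.2 hd)⟩

/-! ### Toeplitz sequences -/

/-- The bi-infinite sequence with the letter `a i` at the positions of order `i`. The position `0`,
which has no order, carries the letter `b`. -/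
noncomputable def toeplitzSeq (a : ℕ → A) (n : ℕ → ℕ) (b : A) (y : ℤ) : A :=
  if y = 0 then b else a (sInf {i | HasOrder n i y})

/-- The sequence `x` has the `k`-skeleton of the coding: the positions of order `i < k` carry the
letter `a i`, while the letters at the multiples of `scale n k` are arbitrary. -/
def HasSkeleton (a : ℕ → A) (n : ℕ → ℕ) (k : ℕ) (x : ℤ → A) : Prop :=
  ∀ i < k, ∀ y, HasOrder n i y → x y = a i

@[simp]
lemma toeplitzSeq_zero (b : A) : toeplitzSeq a n b 0 = b := if_pos rfl

lemma toeplitzSeq_of_hasOrder {i : ℕ} {y : ℤ} (b : A) (h : HasOrder n i y) :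
    toeplitzSeq a n b y = a i := by
  have horder : sInf {j | HasOrder n j y} = i :=
    (Nat.sInf_mem (s := {j | HasOrder n j y}) ⟨i, h⟩).unique h
  rw [toeplitzSeq, if_neg h.ne_zero, horder]

lemma hasSkeleton_toeplitzSeq (b : A) (k : ℕ) : HasSkeleton a n k (toeplitzSeq a n b) :=
  fun _ _ _ h => toeplitzSeq_of_hasOrder b h

lemma toeplitzSeq_mem_Ak (hn : ∀ k, 2 ≤ n k) {i : ℕ} {y : ℤ} (b : A) (hy : y ≠ 0)
    (h : (scale n i : ℤ) ∣ y) : toeplitzSeq a n b y ∈ Ak a i := by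
  obtain ⟨j, hj⟩ := exists_hasOrder hn hy
  exact ⟨j, hj.le h, (toeplitzSeq_of_hasOrder b hj).symm⟩

lemma HasSkeleton.eq_of_modEq {i : ℕ} {x x' : ℤ → A} {y y' : ℤ}
    (hx : HasSkeleton a n (i + 1) x) (hx' : HasSkeleton a n (i + 1) x')
    (hy : ¬(scale n (i + 1) : ℤ) ∣ y) (hy' : ¬(scale n (i + 1) : ℤ) ∣ y')
    (h : y ≡ y' [ZMOD scale n i]) : x y = x' y' := by
  obtain ⟨j, hj, hyj⟩ := exists_hasOrder_lt hy
  rw [hx j hj y hyj, hx' j hj y' (hyj.of_modEq (Nat.le_of_lt_succ hj) h hy')]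

lemma HasSkeleton.window_eq_of_dvd {k : ℕ} {x : ℤ → A} {y : ℤ} (hx : HasSkeleton a n (k + 1) x)
    (hy : (scale n (k + 1) : ℤ) ∣ y) :
    window x (1 + y) (scale n (k + 1) - 1) = window x 1 (scale n (k + 1) - 1) := by
  refine window_eq_window_iff.2 fun t ht => ?_
  have hmod : 1 + y + t ≡ 1 + t [ZMOD scale n (k + 1)] := by
    simpa using (hy.modEq_zero_int.add_left 1).add_right (t : ℤ)
  have hnd : ¬(scale n (k + 1) : ℤ) ∣ 1 + t := fun hd => by
    have := Int.le_of_dvd (by omega) hd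
    omega
  exact hx.eq_of_modEq hx (fun hd => hnd (hmod.dvd_iff.1 hd)) hnd
    (hmod.of_dvd (scale_dvd_scale k.le_succ))

lemma HasSkeleton.block_eq_window (hn : ∀ k, 2 ≤ n k) {k : ℕ} {x : ℤ → A}
    (hx : HasSkeleton a n (k + 1) x) : ToeplitzBlock a n k = window x 1 (scale n (k + 1) - 1) := by
  induction k with
  | zero =>
    rw [ToeplitzBlock, eq_comm, List.eq_replicate_iff]
    refine ⟨by simp [scale], fun c hc => ?_⟩
    obtain ⟨t, ht, rfl⟩ := List.mem_map.1 hc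
    rw [List.mem_range] at ht
    exact hx 0 one_pos _
      (hasOrder_of_pos_of_lt (by simp [scale]) (by omega) (by omega))
  | succ k ih =>
    have hx' : HasSkeleton a n (k + 1) x := fun i hi => hx i (hi.trans k.succ.lt_succ_self)
    obtain ⟨p, hp⟩ := Nat.exists_eq_add_of_le' (scale_pos hn (k + 1))
    obtain ⟨m, hm⟩ := Nat.exists_eq_add_of_le' (one_le_two.trans (hn (k + 1)))
    have hscale : scale n (k + 1 + 1) - 1 = (p + 1) * m + p := by
      rw [scale_succ _ (k + 1), hp, hm, mul_add, mul_one, ← add_assoc, Nat.add_sub_cancel]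
    rw [ToeplitzBlock, hscale, hm, ih hx', hp, Nat.add_sub_cancel]
    refine (window_eq_intercalate (fun r _ => ?_) fun r hr => ?_).symm
    · have hd : (scale n (k + 1) : ℤ) ∣ (p + 1) * r := ⟨r, by rw [hp]; push_cast; rfl⟩
      simpa only [hp, Nat.add_sub_cancel] using hx'.window_eq_of_dvd hd
    · have hlt : (p + 1) * (r + 1) < (p + 1) * (m + 1) :=
        Nat.mul_lt_mul_of_pos_left (Nat.succ_lt_succ hr) p.succ_pos
      have hpos : (1 + (p + 1) * r + p : ℤ) = ((p + 1) * (r + 1) : ℕ) := by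
        push_cast
        ring
      rw [hpos]
      refine hx (k + 1) k.succ.lt_succ_self _ (hasOrder_of_pos_of_lt ?_ (by positivity) ?_)
      · exact ⟨(r + 1 : ℕ), by rw [hp]; push_cast; rfl⟩
      · rw [scale_succ _ (k + 1), hp, hm]
        exact_mod_cast hlt

lemma length_block_add_one (hn : ∀ k, 2 ≤ n k) (k : ℕ) :
    (ToeplitzBlock a n k).length + 1 = scale n (k + 1) := by
  rw [(hasSkeleton_toeplitzSeq (a 0) _).block_eq_window hn, length_window]
  exact Nat.sub_add_cancel (scale_pos hn _)

lemma lenPrev_add_one (hn : ∀ k, 2 ≤ n k) (k : ℕ) : lenPrev a n k + 1 = scale n k := by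
  cases k with
  | zero => simp [lenPrev, scale]
  | succ k => exact length_block_add_one hn k

lemma mem_lang_iff_exists_window (hn : ∀ k, 2 ≤ n k) (b : A) {u : List A} :
    u ∈ ToeplitzLang a n ↔ ∃ y : ℤ, 0 < y ∧ window (toeplitzSeq a n b) y u.length = u := by
  have hblock (k : ℕ) := (hasSkeleton_toeplitzSeq (a := a) (n := n) b (k + 1)).block_eq_window hn
  simp only [ToeplitzLang, Set.mem_ofPred_eq, hblock, infix_window_iff]
  constructor
  · rintro ⟨k, i, -, hu⟩
    exact ⟨1 + i, by omega, hu⟩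
  · rintro ⟨y, hy, hu⟩
    have := lt_scale hn (y.toNat + u.length + 1)
    refine ⟨y.toNat + u.length, (y - 1).toNat, by omega, ?_⟩
    rwa [show (1 : ℤ) + (y - 1).toNat = y by omega]

lemma HasSkeleton.apply_eq_of_not_modEq {i k : ℕ} {x : ℤ → A} {y y' : ℤ}
    (hx : HasSkeleton a n k x) (hi : i < k) (h : y ≡ y' [ZMOD scale n i])
    (hne : ¬y ≡ y' [ZMOD scale n (i + 1)]) (hd : (scale n (i + 1) : ℤ) ∣ y) : x y' = a i :=
  hx i hi y' ⟨h.dvd_iff.1 ((scale_dvd_scale i.le_succ).trans hd),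
    fun hd' => hne (hd.modEq_zero_int.trans hd'.zero_modEq_int)⟩

/-- If two phases agree modulo `scale n i` but not modulo `scale n (i + 1)`, some index of the
window is a position of order `i + 1` for one phase and of order `i` for the other, hence carries
both `a (i + 1)` and `a i`. -/
lemma modEq_of_window_eq (hn : ∀ k, 2 ≤ n k) (ha : ∀ k, a k ≠ a (k + 1)) {k L : ℕ} {x x' : ℤ → A}
    {y y' : ℤ} (hL : scale n (k + 1) ≤ L) (hx : HasSkeleton a n (k + 1) x)
    (hx' : HasSkeleton a n (k + 1) x') (h : window x y L = window x' y' L) :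
    y ≡ y' [ZMOD scale n k] := by
  rw [window_eq_window_iff] at h
  suffices ∀ i ≤ k, y ≡ y' [ZMOD scale n i] from this k le_rfl
  intro i hi
  induction i with
  | zero => simp [scale, Int.modEq_one]
  | succ i ih =>
    by_contra hne
    obtain ⟨t, ht, hy⟩ := exists_lt_hasOrder_add hn (i + 1) y
    have hxt : x (y + t) = a (i + 1) := hx _ (by omega) _ hy
    have hxt' : x' (y' + t) = a i :=
      hx'.apply_eq_of_not_modEq (by omega) ((ih (by omega)).add_right t)
        (fun h => hne (h.add_right_cancel' _)) hy.1
    have htL : t < L := ht.trans_le ((scale_mono hn (by omega)).trans hL)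
    exact ha i (by rw [← hxt', ← h t htL, hxt])

lemma apply_eq_of_window_eq (hn : ∀ k, 2 ≤ n k) (ha : ∀ k, a k ≠ a (k + 1)) {k L t : ℕ}
    {x x' : ℤ → A} {y y' : ℤ} (hL : scale n (k + 1) ≤ L) (hx : HasSkeleton a n (k + 1) x)
    (hx' : HasSkeleton a n (k + 1) x') (h : window x y L = window x' y' L)
    (hne : ¬y ≡ y' [ZMOD scale n (k + 1)]) (ht : t < L) (hd : (scale n (k + 1) : ℤ) ∣ y + t) :
    x (y + t) = a k := by
  have hmod := modEq_of_window_eq hn ha hL hx hx' h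
  rw [window_eq_window_iff.1 h t ht]
  exact hx'.apply_eq_of_not_modEq k.lt_succ_self (hmod.add_right t)
    (fun h => hne (h.add_right_cancel' _)) hd

/-! ### Pointed words -/

/-- The word of length `L` of the sequence `toeplitzSeq a n b` in which the position `0`, carrying
`b`, has index `j`. -/
noncomputable def pointedWord (a : ℕ → A) (n : ℕ → ℕ) (L : ℕ) (b : A) (j : ℕ) : List A :=
  window (toeplitzSeq a n b) (-j) L

lemma pointedWord_eq_iff {L j j' : ℕ} {b b' : A} :
    pointedWord a n L b j = pointedWord a n L b' j' ↔
      ∀ t < L, toeplitzSeq a n b (-j + t) = toeplitzSeq a n b' (-j' + t) :=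
  window_eq_window_iff

lemma not_dvd_neg_add {m L j t : ℕ} (hL : L ≤ m) (hj : j < L) (ht : t < L) (hne : t ≠ j) :
    ¬(m : ℤ) ∣ -j + t := fun hd => by
  have := Int.eq_zero_of_abs_lt_dvd hd (abs_lt.2 ⟨by omega, by omega⟩)
  omega

lemma forall_dvd_neg_add_imp_eq_iff {q L j : ℕ} (hq : 0 < q) (hj : j < L) :
    (∀ t < L, (q : ℤ) ∣ -j + t → t = j) ↔ j < q ∧ L ≤ j + q := by
  constructor
  · intro h
    constructor <;> by_contra! hle
    · have := h (j - q) (by omega) ⟨-1, by omega⟩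
      omega
    · have := h (j + q) hle ⟨1, by omega⟩
      omega
  · rintro ⟨hjq, hLq⟩ t ht hd
    have := Int.eq_zero_of_abs_lt_dvd hd (abs_lt.2 ⟨by omega, by omega⟩)
    omega

lemma window_eq_pointedWord {i L j : ℕ} {y : ℤ} {b : A} (hL : L ≤ scale n (i + 1)) (hj : j < L)
    (hd : (scale n i : ℤ) ∣ y + j) (hnd : ∀ t < L, t ≠ j → ¬(scale n (i + 1) : ℤ) ∣ y + t) :
    window (toeplitzSeq a n b) y L = pointedWord a n L (toeplitzSeq a n b (y + j)) j := by
  refine window_eq_window_iff.2 fun t ht => ?_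
  rcases eq_or_ne t j with rfl | htj
  · simp
  have hmod : y + t ≡ -j + t [ZMOD scale n i] := by
    refine Int.ModEq.add_right _ (Int.modEq_iff_dvd.2 ?_)
    rwa [← neg_add', dvd_neg, add_comm]
  exact (hasSkeleton_toeplitzSeq _ _).eq_of_modEq (hasSkeleton_toeplitzSeq _ _) (hnd t ht htj)
    (not_dvd_neg_add hL hj ht htj) hmod

lemma window_eq_pointedWord_of_dvd (hn : ∀ k, 2 ≤ n k) {i L j : ℕ} {y : ℤ} {b : A}
    (hL : L ≤ scale n i) (hj : j < L) (hd : (scale n i : ℤ) ∣ y + j) :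
    window (toeplitzSeq a n b) y L = pointedWord a n L (toeplitzSeq a n b (y + j)) j := by
  refine window_eq_pointedWord (hL.trans (scale_mono hn i.le_succ)) hj hd fun t ht htj ht' => ?_
  refine not_dvd_neg_add hL hj ht htj ?_
  rw [show (-j + t : ℤ) = (y + t) - (y + j) by ring]
  exact ((scale_dvd_scale i.le_succ).trans ht').sub hd

lemma toeplitzSeq_eq_of_dvd {i : ℕ} {y : ℤ} (hd : (scale n i : ℤ) ∣ y)
    (hy : (scale n (i + 1) : ℤ) ∣ y → y = 0) : toeplitzSeq a n (a i) y = a i := by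
  rcases eq_or_ne y 0 with rfl | hne
  · exact toeplitzSeq_zero _
  · exact toeplitzSeq_of_hasOrder _ ⟨hd, mt hy hne⟩

lemma toeplitzSeq_eq_of_modEq {i : ℕ} {y y' : ℤ} (h : y ≡ y' [ZMOD scale n i])
    (hy : (scale n (i + 1) : ℤ) ∣ y → y = 0) (hy' : (scale n (i + 1) : ℤ) ∣ y' → y' = 0) :
    toeplitzSeq a n (a i) y = toeplitzSeq a n (a i) y' := by
  by_cases hd : (scale n i : ℤ) ∣ y
  · rw [toeplitzSeq_eq_of_dvd hd hy, toeplitzSeq_eq_of_dvd (h.dvd_iff.1 hd) hy']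
  · have hnd {z : ℤ} (hz : ¬(scale n i : ℤ) ∣ z) : ¬(scale n (i + 1) : ℤ) ∣ z :=
      mt (scale_dvd_scale i.le_succ).trans hz
    exact (hasSkeleton_toeplitzSeq _ _).eq_of_modEq (hasSkeleton_toeplitzSeq _ _) (hnd hd)
      (hnd (mt h.dvd_iff.2 hd)) h

lemma pointedWord_eq_of_modEq (hn : ∀ k, 2 ≤ n k) {i L j j' : ℕ} (h : j ≡ j' [MOD scale n i])
    (hj : j < L) (hj' : j' < L) (hiso : j < scale n (i + 1) ∧ L ≤ j + scale n (i + 1))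
    (hiso' : j' < scale n (i + 1) ∧ L ≤ j' + scale n (i + 1)) :
    pointedWord a n L (a i) j = pointedWord a n L (a i) j' := by
  rw [← forall_dvd_neg_add_imp_eq_iff (scale_pos hn _) (by assumption)] at hiso hiso'
  refine pointedWord_eq_iff.2 fun t ht => toeplitzSeq_eq_of_modEq
    ((Int.natCast_modEq_iff.2 h).neg.add_right _) (fun hd => ?_) (fun hd => ?_)
  · have := hiso t ht hd
    omega
  · have := hiso' t ht hd
    omega

lemma eq_of_pointedWord_eq_of_modEq {i L j j' : ℕ} {b b' : A} (hL : L ≤ scale n (i + 1))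
    (hj : j < L) (hj' : j' < L) (hne : j ≠ j') (hmod : j ≡ j' [MOD scale n i])
    (h : pointedWord a n L b j = pointedWord a n L b' j') : b = a i := by
  have hord : HasOrder n i (-j' + j) :=
    ⟨by simpa [sub_eq_neg_add] using (Int.natCast_modEq_iff.2 hmod).symm.dvd,
      not_dvd_neg_add hL hj' hj hne⟩
  have hb := pointedWord_eq_iff.1 h j hj
  rwa [neg_add_cancel, toeplitzSeq_zero, toeplitzSeq_of_hasOrder _ hord] at hb

lemma eq_and_isolated_of_pointedWord_eq (hn : ∀ k, 2 ≤ n k) (ha : ∀ k, a k ≠ a (k + 1))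
    {k L j j' : ℕ} {b b' : A} (hL : scale n (k + 1) ≤ L) (hL' : L ≤ scale n (k + 2)) (hj : j < L)
    (hmod : ¬j ≡ j' [MOD scale n (k + 1)])
    (h : pointedWord a n L b j = pointedWord a n L b' j') :
    b = a k ∧ j < scale n (k + 1) ∧ L ≤ j + scale n (k + 1) := by
  have hhole : ∀ t < L, (scale n (k + 1) : ℤ) ∣ -j + t → toeplitzSeq a n b (-j + t) = a k :=
    fun t ht hd => apply_eq_of_window_eq hn ha hL (hasSkeleton_toeplitzSeq _ _)
      (hasSkeleton_toeplitzSeq _ _) h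
      (fun h => hmod (Int.natCast_modEq_iff.1 (Int.neg_modEq_neg.1 h))) ht hd
  refine ⟨by simpa using hhole j hj (by simp), ?_⟩
  refine (forall_dvd_neg_add_imp_eq_iff (scale_pos hn _) hj).1 fun t ht hd => ?_
  by_contra hne
  have hord : HasOrder n (k + 1) (-j + t) := ⟨hd, not_dvd_neg_add hL' hj ht hne⟩
  exact ha k (by rw [← hhole t ht hd, toeplitzSeq_of_hasOrder _ hord])

lemma pointedWord_eq_cases (hn : ∀ k, 2 ≤ n k) (ha : ∀ k, a k ≠ a (k + 1)) {k L j j' : ℕ}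
    {b b' : A} (hL : scale n (k + 1) ≤ L) (hL' : L ≤ scale n (k + 2)) (hj : j < L) (hj' : j' < L)
    (h : pointedWord a n L b j = pointedWord a n L b' j') :
    b = b' ∧ (j = j' ∨ b = a (k + 1) ∧ j ≡ j' [MOD scale n (k + 1)] ∨
      b = a k ∧ (j < scale n (k + 1) ∧ L ≤ j + scale n (k + 1)) ∧
        (j' < scale n (k + 1) ∧ L ≤ j' + scale n (k + 1)) ∧ j ≡ j' [MOD scale n k]) := by
  rcases eq_or_ne j j' with rfl | hne
  · exact ⟨by simpa using pointedWord_eq_iff.1 h j hj, Or.inl rfl⟩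
  by_cases hmod : j ≡ j' [MOD scale n (k + 1)]
  · have hb := eq_of_pointedWord_eq_of_modEq hL' hj hj' hne hmod h
    have hb' := eq_of_pointedWord_eq_of_modEq hL' hj' hj hne.symm hmod.symm h.symm
    exact ⟨hb.trans hb'.symm, Or.inr (Or.inl ⟨hb, hmod⟩)⟩
  · obtain ⟨hb, hiso⟩ := eq_and_isolated_of_pointedWord_eq hn ha hL hL' hj hmod h
    obtain ⟨hb', hiso'⟩ :=
      eq_and_isolated_of_pointedWord_eq hn ha hL hL' hj' (mt Nat.ModEq.symm hmod) h.symm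
    have hmod' : j ≡ j' [MOD scale n k] := Int.natCast_modEq_iff.1 <| Int.neg_modEq_neg.1 <|
      modEq_of_window_eq hn ha hL (hasSkeleton_toeplitzSeq _ _) (hasSkeleton_toeplitzSeq _ _) h
    exact ⟨hb.trans hb'.symm, Or.inr (Or.inr ⟨hb, hiso, hiso', hmod'⟩)⟩

/-! ### Counting -/

open Classical in
/-- The indices `j` retained for the letter `b` when the words of length `L`, with
`scale n (k + 1) ≤ L ≤ scale n (k + 2)`, are listed as `pointedWord a n L b j`, each exactly once.
For `b = a (k + 1)` only `j` modulo `scale n (k + 1)` matters, and if this letter is not used again,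
the next positions of order greater than `k + 1` on both sides bound `j` from below. For `b = a k`
the indices `j` whose position is the only multiple of `scale n (k + 1)` in the word matter only
modulo `scale n k`, and the smallest ones are retained. The truncated difference
`L + scale n (k + 1) - scale n (k + 2)` is intended. -/
noncomputable def reps (a : ℕ → A) (n : ℕ → ℕ) (k L : ℕ) (b : A) : Finset ℕ :=
  if b = a (k + 1) then
    Finset.Ico (if b ∈ Ak a (k + 2) then 0 else L + scale n (k + 1) - scale n (k + 2))
      (scale n (k + 1))
  else if b = a k then
    Finset.range L \ Finset.Ico (L - scale n (k + 1) + scale n k) (scale n (k + 1))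
  else Finset.range L

lemma mem_reps_succ {k L j : ℕ} : j ∈ reps a n k L (a (k + 1)) ↔ j < scale n (k + 1) ∧
    (a (k + 1) ∈ Ak a (k + 2) ∨ L + scale n (k + 1) ≤ j + scale n (k + 2)) := by
  rw [reps, if_pos rfl, Finset.mem_Ico, and_comm]
  split_ifs with h <;> simp [h]

lemma mem_reps_self (ha : ∀ k, a k ≠ a (k + 1)) {k L j : ℕ} (hL : scale n (k + 1) ≤ L) :
    j ∈ reps a n k L (a k) ↔
      j < L ∧ (j + scale n (k + 1) < L + scale n k ∨ scale n (k + 1) ≤ j) := by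
  rw [reps, if_neg (ha k), if_pos rfl, Finset.mem_sdiff, Finset.mem_range, Finset.mem_Ico]
  omega

lemma mem_reps_of_ne {k L j : ℕ} {b : A} (hb : b ≠ a (k + 1)) (hb' : b ≠ a k) :
    j ∈ reps a n k L b ↔ j < L := by
  rw [reps, if_neg hb, if_neg hb', Finset.mem_range]

lemma lt_of_mem_reps {k L j : ℕ} {b : A} (hL : scale n (k + 1) ≤ L) (hj : j ∈ reps a n k L b) :
    j < L := by
  unfold reps at hj
  split_ifs at hj <;> simp only [Finset.mem_Ico, Finset.mem_sdiff, Finset.mem_range] at hj <;> omega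

open Classical in
lemma card_reps (hn : ∀ k, 2 ≤ n k) (ha : ∀ k, a k ≠ a (k + 1)) {k L : ℕ}
    (hL : scale n (k + 1) ≤ L) (hL' : L ≤ scale n (k + 2)) (b : A) :
    ((reps a n k L b).card : ℤ) = L
      - (if b = a (k + 1) then
          (L - scale n (k + 1) : ℤ) + (if a (k + 1) ∉ Ak a (k + 2) then 1 else 0)
            * max 0 (L + scale n (k + 1) - scale n (k + 2) : ℤ) else 0)
      - (if b = a k then max 0 (2 * scale n (k + 1) - scale n k - L : ℤ) else 0) := by
  have hscale := two_mul_scale_le hn k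
  rcases eq_or_ne b (a (k + 1)) with rfl | hb
  · rw [reps, if_pos rfl, if_pos rfl, if_neg (ha k).symm, Nat.card_Ico]
    split_ifs <;> omega
  rcases eq_or_ne b (a k) with rfl | hb'
  · have hsub : Finset.Ico (L - scale n (k + 1) + scale n k) (scale n (k + 1)) ⊆ Finset.range L :=
      fun j hj => Finset.mem_range.2 ((Finset.mem_Ico.1 hj).2.trans_le hL)
    rw [reps, if_neg hb, if_pos rfl, if_neg hb, if_pos rfl, Finset.card_sdiff_of_subset hsub,
      Finset.card_range, Nat.card_Ico]
    omega
  · simp [reps, hb, hb']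

lemma exists_mem_reps_pointedWord_eq (hn : ∀ k, 2 ≤ n k) (ha : ∀ k, a k ≠ a (k + 1)) {k L j : ℕ}
    {b : A} (hL : scale n (k + 1) ≤ L) (hL' : L ≤ scale n (k + 2)) (hb : b ∈ Ak a (k + 2))
    (hj : j < L) : ∃ j' ∈ reps a n k L b, pointedWord a n L b j' = pointedWord a n L b j := by
  have hscale := two_mul_scale_le hn k
  rcases eq_or_ne b (a (k + 1)) with rfl | hne
  · have hlt := Nat.mod_lt j (scale_pos hn (k + 1))
    exact ⟨j % scale n (k + 1), mem_reps_succ.2 ⟨hlt, Or.inl hb⟩,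
      pointedWord_eq_of_modEq hn (Nat.mod_modEq _ _) (hlt.trans_le hL) hj
        ⟨hlt.trans_le (hL.trans hL'), hL'.trans (Nat.le_add_left _ _)⟩
        ⟨hj.trans_le hL', hL'.trans (Nat.le_add_left _ _)⟩⟩
  rcases eq_or_ne b (a k) with rfl | hne'
  · by_cases hmem : j ∈ reps a n k L (a k)
    · exact ⟨j, hmem, rfl⟩
    rw [mem_reps_self ha hL] at hmem
    obtain ⟨c, rfl⟩ := Nat.exists_eq_add_of_le' hL
    obtain ⟨d, rfl⟩ := Nat.exists_eq_add_of_le (show c ≤ j by omega)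
    have hlt := Nat.mod_lt d (scale_pos hn k)
    refine ⟨c + d % scale n k, (mem_reps_self ha hL).2 ⟨by omega, Or.inl (by omega)⟩, ?_⟩
    exact pointedWord_eq_of_modEq hn ((Nat.mod_modEq _ _).add_left _) (by omega) hj
      ⟨by omega, by omega⟩ ⟨by omega, by omega⟩
  · exact ⟨j, (mem_reps_of_ne hne hne').2 hj, rfl⟩

/-- Among the `n i` consecutive multiples of `scale n i` starting at index `j` one is a multiple of
`scale n (i + 1)`, and it must lie beyond the window. -/
lemma add_scale_le_of_forall_not_dvd (hn : ∀ k, 2 ≤ n k) {i L j : ℕ} {y : ℤ}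
    (hd : (scale n i : ℤ) ∣ y + j) (hnd : ∀ t < L, ¬(scale n (i + 1) : ℤ) ∣ y + t) :
    L + scale n i ≤ j + scale n (i + 1) := by
  obtain ⟨m, hm⟩ := hd
  obtain ⟨r, hr, hdvd⟩ := exists_lt_dvd_add (two_pos.trans_le (hn i)) m
  have hmul : (scale n (i + 1) : ℤ) ∣ y + (j + scale n i * r : ℕ) := by
    have := mul_dvd_mul_left (scale n i : ℤ) hdvd
    rw [scale_succ]
    push_cast
    rwa [← add_assoc, hm, ← mul_add]
  have hle : L ≤ j + scale n i * r := not_lt.1 fun hlt => hnd _ hlt hmul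
  have : scale n i * r + scale n i ≤ scale n (i + 1) := by
    rw [scale_succ, ← Nat.mul_succ]
    exact Nat.mul_le_mul_left _ hr
  omega

lemma exists_pointedWord_eq_of_mem_lang (hn : ∀ k, 2 ≤ n k) (ha : ∀ k, a k ≠ a (k + 1)) {k L : ℕ}
    (hL : scale n (k + 1) ≤ L) (hL' : L ≤ scale n (k + 2)) {u : List A}
    (hu : u ∈ ToeplitzLang a n) (huL : u.length = L) :
    ∃ b ∈ Ak a (k + 1), ∃ j ∈ reps a n k L b, pointedWord a n L b j = u := by
  obtain ⟨y, hy, hyu⟩ := (mem_lang_iff_exists_window hn (a 0)).1 hu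
  rw [← hyu, huL]
  by_cases hN : ∃ j < L, (scale n (k + 2) : ℤ) ∣ y + j
  · obtain ⟨j, hj, hd⟩ := hN
    have hb := toeplitzSeq_mem_Ak (a := a) hn (a 0) (by omega : y + j ≠ 0) hd
    obtain ⟨j', hj', h⟩ := exists_mem_reps_pointedWord_eq hn ha hL hL' hb hj
    obtain ⟨i, hi, hbi⟩ := hb
    exact ⟨_, ⟨i, by omega, hbi⟩, j', hj',
      h.trans (window_eq_pointedWord_of_dvd hn hL' hj hd).symm⟩
  · push Not at hN
    obtain ⟨j, hj, hd⟩ := exists_lt_dvd_add (scale_pos hn (k + 1)) y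
    have hjL := hj.trans_le hL
    have hb : toeplitzSeq a n (a 0) (y + j) = a (k + 1) :=
      toeplitzSeq_of_hasOrder _ ⟨hd, hN j hjL⟩
    refine ⟨a (k + 1), ⟨k + 1, le_rfl, rfl⟩, j,
      mem_reps_succ.2 ⟨hj, Or.inr (add_scale_le_of_forall_not_dvd hn hd hN)⟩, ?_⟩
    rw [window_eq_pointedWord hL' hjL hd fun t ht _ => hN t ht, hb]

lemma pointedWord_mem_lang_of_mem_Ak (hn : ∀ k, 2 ≤ n k) {i L j : ℕ} {b : A}
    (hL : L ≤ scale n i) (hb : b ∈ Ak a i) (hj : j < L) :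
    pointedWord a n L b j ∈ ToeplitzLang a n := by
  obtain ⟨m, hm, rfl⟩ := hb
  have hmono := scale_mono hn hm
  refine (mem_lang_iff_exists_window hn (a m)).2 ⟨scale n m - j, by omega, ?_⟩
  rw [pointedWord, length_window, window_eq_pointedWord_of_dvd hn (hL.trans hmono) hj (by simp),
    sub_add_cancel, toeplitzSeq_of_hasOrder _ (hasOrder_scale hn m), pointedWord]

lemma pointedWord_mem_lang_of_add_le (hn : ∀ k, 2 ≤ n k) {i L j : ℕ} (hL : L ≤ scale n (i + 1))
    (hj : j < scale n i) (hjL : j < L) (hle : L + scale n i ≤ j + scale n (i + 1)) :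
    pointedWord a n L (a i) j ∈ ToeplitzLang a n := by
  refine (mem_lang_iff_exists_window hn (a i)).2 ⟨scale n i - j, by omega, ?_⟩
  rw [pointedWord, length_window, window_eq_pointedWord hL hjL (by simp), sub_add_cancel,
    toeplitzSeq_of_hasOrder _ (hasOrder_scale hn i), pointedWord]
  intro t ht _ hd
  have := Int.le_of_dvd (by omega) hd
  omega

lemma pointedWord_mem_lang_of_mem_reps (hn : ∀ k, 2 ≤ n k) {k L j : ℕ} {b : A}
    (hL : scale n (k + 1) ≤ L) (hL' : L ≤ scale n (k + 2)) (hb : b ∈ Ak a (k + 1))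
    (hj : j ∈ reps a n k L b) : pointedWord a n L b j ∈ ToeplitzLang a n := by
  have hjL := lt_of_mem_reps hL hj
  by_cases hb' : b ∈ Ak a (k + 2)
  · exact pointedWord_mem_lang_of_mem_Ak hn hL' hb' hjL
  obtain ⟨m, hm, rfl⟩ := hb
  obtain rfl : m = k + 1 := by
    by_contra hne
    exact hb' ⟨m, by omega, rfl⟩
  obtain ⟨hjq, hle⟩ := mem_reps_succ.1 hj
  exact pointedWord_mem_lang_of_add_le hn hL' hjq hjL (hle.resolve_left hb')

lemma eq_and_eq_of_pointedWord_eq (hn : ∀ k, 2 ≤ n k) (ha : ∀ k, a k ≠ a (k + 1)) {k L j j' : ℕ}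
    {b b' : A} (hL : scale n (k + 1) ≤ L) (hL' : L ≤ scale n (k + 2)) (hj : j ∈ reps a n k L b)
    (hj' : j' ∈ reps a n k L b') (h : pointedWord a n L b j = pointedWord a n L b' j') :
    b = b' ∧ j = j' := by
  obtain ⟨rfl, rfl | ⟨rfl, hmod⟩ | ⟨rfl, hiso, hiso', hmod⟩⟩ :=
    pointedWord_eq_cases hn ha hL hL' (lt_of_mem_reps hL hj) (lt_of_mem_reps hL hj') h
  · exact ⟨rfl, rfl⟩
  · exact ⟨rfl, hmod.eq_of_lt_of_lt (mem_reps_succ.1 hj).1 (mem_reps_succ.1 hj').1⟩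
  · rw [mem_reps_self ha hL] at hj hj'
    exact ⟨rfl, hmod.eq_of_abs_lt (abs_lt.2 ⟨by omega, by omega⟩)⟩

lemma cmpl_eq_sum_card_reps (hn : ∀ k, 2 ≤ n k) (ha : ∀ k, a k ≠ a (k + 1)) {k L : ℕ}
    (hL : scale n (k + 1) ≤ L) (hL' : L ≤ scale n (k + 2)) (hA : (Ak a (k + 1)).Finite) :
    cmpl a n L = ∑ b ∈ hA.toFinset, (reps a n k L b).card := by
  set S := hA.toFinset.sigma (reps a n k L)
  have hwords : {u | u ∈ ToeplitzLang a n ∧ u.length = L} =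
      (fun p : Σ _ : A, ℕ => pointedWord a n L p.1 p.2) '' S := by
    ext u
    simp only [Set.mem_ofPred_eq, Set.mem_image, Sigma.exists, SetLike.mem_coe, S,
      Finset.mem_sigma, Set.Finite.mem_toFinset]
    constructor
    · rintro ⟨hu, huL⟩
      obtain ⟨b, hb, j, hj, h⟩ := exists_pointedWord_eq_of_mem_lang hn ha hL hL' hu huL
      exact ⟨b, j, ⟨hb, hj⟩, h⟩
    · rintro ⟨b, j, ⟨hb, hj⟩, rfl⟩
      exact ⟨pointedWord_mem_lang_of_mem_reps hn hL hL' hb hj, length_window _ _ _⟩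
  have hinj : Set.InjOn (fun p : Σ _ : A, ℕ => pointedWord a n L p.1 p.2) S := by
    rintro ⟨b, j⟩ hp ⟨b', j'⟩ hp' h
    obtain ⟨rfl, rfl⟩ := eq_and_eq_of_pointedWord_eq hn ha hL hL' (Finset.mem_sigma.1 hp).2
      (Finset.mem_sigma.1 hp').2 h
    rfl
  rw [cmpl, hwords, hinj.ncard_image, Set.ncard_coe_finset, Finset.card_sigma]

open Classical in
lemma cmpl_eq (hn : ∀ k, 2 ≤ n k) (ha : ∀ k, a k ≠ a (k + 1)) {k L : ℕ}
    (hL : scale n (k + 1) ≤ L) (hL' : L ≤ scale n (k + 2)) (hA : (Ak a (k + 1)).Finite) :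
    (cmpl a n L : ℤ) = scale n (k + 1) + ((Ak a (k + 1)).ncard - 1) * L
      - (if a k ∈ Ak a (k + 1) then 1 else 0) * max 0 (2 * scale n (k + 1) - scale n k - L : ℤ)
      - (if a (k + 1) ∉ Ak a (k + 2) then 1 else 0)
        * max 0 (L + scale n (k + 1) - scale n (k + 2) : ℤ) := by
  have hmem : a (k + 1) ∈ Ak a (k + 1) := ⟨k + 1, le_rfl, rfl⟩
  rw [cmpl_eq_sum_card_reps hn ha hL hL' hA, Nat.cast_sum,
    Finset.sum_congr rfl fun b _ => card_reps hn ha hL hL' b, Finset.sum_sub_distrib,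
    Finset.sum_sub_distrib, Finset.sum_const, Finset.sum_ite_eq', Finset.sum_ite_eq',
    Set.ncard_eq_toFinset_card _ hA, nsmul_eq_mul]
  simp only [Set.Finite.mem_toFinset, if_pos hmem, ite_mul, one_mul, zero_mul]
  ring

lemma length_block_add_one_eq_mul (hn : ∀ k, 2 ≤ n k) (k : ℕ) :
    (ToeplitzBlock a n k).length + 1 = (lenPrev a n k + 1) * n k := by
  rw [length_block_add_one hn, scale_succ, lenPrev_add_one hn]

end SimpleToeplitz

open Classical in
theorem stmt9_general {A : Type*} (a : ℕ → A) (n : ℕ → ℕ) (hn : ∀ k, 2 ≤ n k)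
    (ha : ∀ k, a k ≠ a (k + 1)) (k : ℕ) (hk : 1 ≤ k) (hA : (Ak a k).Finite) (L : ℕ)
    (hL1 : lenPrev a n k + 1 ≤ L) (hL2 : L ≤ (ToeplitzBlock a n k).length + 1) :
    (cmpl a n L : ℤ) = (lenPrev a n k + 1) + ((Ak a k).ncard - 1) * L
      - (if a (k - 1) ∈ Ak a k then 1 else 0)
        * max 0 (2 * lenPrev a n k + 1 - lenPrev a n (k - 1) - L : ℤ)
      - (if a k ∉ Ak a (k + 1) then 1 else 0)
        * max 0 (L - (ToeplitzBlock a n k).length + lenPrev a n k : ℤ) := by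
  obtain ⟨k, rfl⟩ := Nat.exists_eq_add_of_le' hk
  have hprev := SimpleToeplitz.lenPrev_add_one (a := a) hn k
  have hprev' := SimpleToeplitz.lenPrev_add_one (a := a) hn (k + 1)
  have hblock := SimpleToeplitz.length_block_add_one (a := a) hn (k + 1)
  rw [SimpleToeplitz.cmpl_eq hn ha (hprev' ▸ hL1) (hblock ▸ hL2) hA, ← hprev, ← hprev', ← hblock,
    Nat.add_sub_cancel]
  push_cast
  ring_nf

/- STATEMENT 9: the complexity function for `k ≥ 1` with `n k > 2` on the range
`|p (k-1)| + 2 ≤ L ≤ |p k| + 1`. -/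
open Classical in
theorem stmt9 {A : Type*} [Fintype A] [Nonempty A]
    (a : ℕ → A) (n : ℕ → ℕ) (hn : ∀ k, 2 ≤ n k) (ha : ∀ k, a k ≠ a (k + 1))
    (hAev : 2 ≤ (Aev a).ncard)
    (k : ℕ) (hk : 1 ≤ k) (hnk : 2 < n k) (L : ℕ)
    (hL1 : lenPrev a n k + 2 ≤ L) (hL2 : L ≤ (ToeplitzBlock a n k).length + 1) :
    (cmpl a n L : ℤ) =
      ((lenPrev a n k : ℤ) + 1) + (((Ak a k).ncard : ℤ) - 1) * (L : ℤ)
        + (if L + lenPrev a n (k - 1) ≤ 2 * lenPrev a n k + 1 then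
            (if a (k - 1) ∈ Ak a k then 1 else 0) *
              ((L : ℤ) - 2 * (lenPrev a n k : ℤ) + (lenPrev a n (k - 1) : ℤ) - 1)
          else if L + lenPrev a n k ≤ (ToeplitzBlock a n k).length then 0
          else -(if a k ∉ Ak a (k + 1) then 1 else 0) *
              ((L : ℤ) - ((ToeplitzBlock a n k).length : ℤ) + (lenPrev a n k : ℤ))) := by
  have hmul := SimpleToeplitz.length_block_add_one_eq_mul (a := a) hn k
  have hsep : (lenPrev a n k + 1) * 3 ≤ (lenPrev a n k + 1) * n k := Nat.mul_le_mul_left _ hnk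
  rw [stmt9_general a n hn ha k hk (Set.toFinite _) L (by omega) hL2]
  split_ifs <;> omega
end

section
/- For every k ≥ N0 + 1 and every L with |p_{k−1}| + 2 ≤ L ≤ |p_k| + 1: C(L) = #A_ev·L − |p_{k−1}| + |p_{k−2}| if |p_{k−1}| + 2 ≤ L ≤ 2|p_{k−1}| − |p_{k−2}| + 1, and C(L) = (#A_ev − 1)·L + |p_{k−1}| + 1 if 2|p_{k−1}| − |p_{k−2}| + 2 ≤ L ≤ |p_k| + 1. -/
/-!
Write `q_j = n_0 ⋯ n_{j-1} = |p_{j-1}| + 1` and let `y_j` be the `q_j`-periodic bi-infinite word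
`⋯ p_{j-1} a_j p_{j-1} a_j ⋯` with the letters `a_j` at the multiples of `q_j`. Then `p_j` is a
window of `y_j`, and `y_{j+1}` arises from `y_j` by replacing the letters at all multiples of
`q_{j+1}` by `a_{j+1}`.

Let `a_{k-1}, a_k ∈ A_{k+1}`. A window of length `L`, `q_k < L ≤ q_{k+1}`, meets at most one
multiple of `q_{k+1}`. So the words of length `L` in the language are those read in `y_k` across the
position `0`, whose letter has been replaced by an arbitrary `b ∈ A_{k+1}`. The letter `b = a_k`
leaves `y_k` unchanged and contributes `q_k` words. Any other letter contributes `L` words, one for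
each position of `b`, except that for `b = a_{k-1}` the windows inside `p_{k-1} a_{k-1} p_{k-1}` are
windows of the `q_{k-1}`-periodic word `y_{k-1}`, so that `max (0, 2 q_k - q_{k-1} - L)` of them
coincide with others. Different letters contribute different words, and hence
`C(L) = q_k + (#A_{k+1} - 1) L - max (0, 2 q_k - q_{k-1} - L)`.
-/

open Filter

lemma intercalate_replicate_append {A : Type*} (S P : List A) (r : ℕ) :
    S.intercalate (List.replicate (r + 1) P) ++ S =
      (List.replicate (r + 1) (P ++ S)).flatten := by
  induction r with
  | zero => simp
  | succ r ih =>
    rw [List.replicate_succ, List.intercalate_cons_of_ne_nil (by simp), List.append_assoc,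
      List.append_assoc, ih, List.replicate_succ (n := r + 1), List.flatten_cons,
      List.append_assoc]

section Windows

variable {A : Type*} {g g' : ℤ → A} {L N : ℕ} {s s' t : ℤ}

/-- The window of length `L` at position `s` of a bi-infinite word `g`, that is, the factor
`g s, …, g (s + L - 1)`. -/
def window (g : ℤ → A) (L : ℕ) (s : ℤ) : List A := List.ofFn fun i : Fin L ↦ g (s + i)

lemma length_window (g : ℤ → A) (L : ℕ) (s : ℤ) : (window g L s).length = L :=
  List.length_ofFn

lemma window_eq_window_iff :
    window g L s = window g' L s' ↔ ∀ x, s ≤ x → x < s + L → g x = g' (x + (s' - s)) := by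
  rw [window, window, List.ofFn_inj, funext_iff]
  constructor
  · intro h x hsx hxL
    have hx : s + (x - s).toNat = x := by omega
    have := h ⟨(x - s).toNat, by omega⟩
    rwa [hx, show s' + (x - s).toNat = x + (s' - s) by omega] at this
  · intro h i
    rw [h (s + i) (by omega) (by omega)]
    congr 1
    ring

lemma window_add (g : ℤ → A) (M N : ℕ) (s : ℤ) :
    window g (M + N) s = window g M s ++ window g N (s + M) := by
  simp only [window, List.ofFn_add, Fin.val_castLE, Fin.val_natAdd, Nat.cast_add, add_assoc]

lemma infix_window_iff {u : List A} :
    u <:+: window g N t ↔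
      ∃ s, t ≤ s ∧ s + u.length ≤ t + N ∧ u = window g u.length s := by
  constructor
  · rintro ⟨v, w, h⟩
    have hN : v.length + u.length + w.length = N := by
      simpa only [List.length_append, length_window] using congrArg List.length h
    refine ⟨t + v.length, by omega, by omega, ?_⟩
    rw [← hN, window_add, window_add] at h
    have hvu := List.append_inj_left h (by simp only [List.length_append, length_window])
    exact List.append_inj_right hvu (length_window ..).symm
  · rintro ⟨s, hts, hsN, hu⟩
    obtain ⟨i, rfl⟩ : ∃ i : ℕ, s = t + i := ⟨(s - t).toNat, by omega⟩
    obtain ⟨r, rfl⟩ : ∃ r, N = i + u.length + r := ⟨N - (i + u.length), by omega⟩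
    rw [window_add, window_add, ← hu]
    exact ⟨_, _, rfl⟩

end Windows

section MinimalPeriod

open Function

variable {A : Type*} {g : ℤ → A} {L q : ℕ} {s s' x y : ℤ}

lemma exists_mem_Ico_modEq (hq : 0 < q) (s r : ℤ) :
    ∃ x, s ≤ x ∧ x < s + q ∧ x ≡ r [ZMOD q] := by
  have hq' : (0 : ℤ) < q := by exact_mod_cast hq
  obtain ⟨hs, hsq⟩ := toIcoMod_mem_Ico hq' s r
  refine ⟨toIcoMod hq' s r, hs, hsq, Int.modEq_iff_dvd.2 ?_⟩
  rw [self_sub_toIcoMod_eq_mul]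
  exact dvd_mul_left _ _

lemma map_eq_of_periodic_of_modEq (hg : Periodic g q) (h : x ≡ y [ZMOD q]) : g x = g y := by
  obtain ⟨c, hc⟩ := h.dvd
  rw [← hg.int_mul c x, mul_comm, Int.cast_id, ← hc, add_sub_cancel]

lemma map_eq_map_zero_of_periodic (hg : Periodic g q) (h : (q : ℤ) ∣ x) : g x = g 0 :=
  map_eq_of_periodic_of_modEq hg (Int.modEq_zero_iff_dvd.2 h)

lemma map_add_of_periodic_of_dvd (hg : Periodic g q) (h : (q : ℤ) ∣ x) : g (x + y) = g y := by
  refine map_eq_of_periodic_of_modEq hg ?_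
  simpa only [zero_add] using (Int.modEq_zero_iff_dvd.2 h).add_right y

lemma window_congr_of_periodic (hg : Periodic g q) (h : s ≡ s' [ZMOD q]) :
    window g L s = window g L s' :=
  window_eq_window_iff.2 fun x _ _ ↦
    map_eq_of_periodic_of_modEq hg (Int.modEq_iff_dvd.2 (by simpa using h.dvd))

lemma window_mul_of_periodic (hg : Periodic g q) (r : ℕ) (s : ℤ) :
    window g (r * q) s = (List.replicate r (window g q s)).flatten := by
  induction r with
  | zero => rw [zero_mul]; rfl
  | succ r ih =>
    rw [Nat.succ_mul, add_comm, window_add, List.replicate_succ, List.flatten_cons, ← ih,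
      window_congr_of_periodic hg Int.add_modEq_right]

/-- `q` is the minimal period of the bi-infinite word `g`, in the sense that the group of all
periods of `g` is generated by `q`. In particular `q = 0` means that `g` is aperiodic. -/
def HasMinPeriod (g : ℤ → A) (q : ℕ) : Prop := ∀ e : ℤ, Periodic g e ↔ (q : ℤ) ∣ e

lemma HasMinPeriod.periodic (hg : HasMinPeriod g q) : Periodic g q := (hg q).2 dvd_rfl

lemma hasMinPeriod_const (b : A) : HasMinPeriod (fun _ ↦ b) 1 := fun e ↦
  iff_of_true (fun _ ↦ rfl) (by simp)

lemma HasMinPeriod.window_eq_window_iff (hg : HasMinPeriod g q) (hq : 0 < q) (hL : q ≤ L) :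
    window g L s = window g L s' ↔ s ≡ s' [ZMOD q] := by
  refine ⟨fun h ↦ Int.modEq_iff_dvd.2 ((hg _).1 fun x ↦ ?_), window_congr_of_periodic hg.periodic⟩
  obtain ⟨x', hsx', hx'q, hx'⟩ := exists_mem_Ico_modEq hq s x
  rw [← map_eq_of_periodic_of_modEq hg.periodic hx',
    _root_.window_eq_window_iff.1 h x' hsx' (by omega)]
  exact map_eq_of_periodic_of_modEq hg.periodic (hx'.symm.add_right _)

end MinimalPeriod

section ReplaceMultiples

open Function

variable {A : Type*} {z : ℤ → A} {q Q : ℕ} {d : A} {x : ℤ}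

/-- The word `z` with its letters at all multiples of `Q` replaced by `d`. This is how the
Toeplitz words of consecutive levels are obtained from each other. -/
def replaceMultiples (z : ℤ → A) (Q : ℕ) (d : A) (x : ℤ) : A := if (Q : ℤ) ∣ x then d else z x

lemma replaceMultiples_of_dvd (h : (Q : ℤ) ∣ x) : replaceMultiples z Q d x = d := if_pos h

lemma replaceMultiples_of_not_dvd (h : ¬ (Q : ℤ) ∣ x) : replaceMultiples z Q d x = z x :=
  if_neg h

lemma periodic_replaceMultiples (hz : Periodic z q) (hqQ : q ∣ Q) :
    Periodic (replaceMultiples z Q d) Q := by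
  intro x
  have hzQ : z (x + Q) = z x := by
    rw [add_comm, map_add_of_periodic_of_dvd hz (Int.natCast_dvd_natCast.2 hqQ)]
  simp only [replaceMultiples, dvd_add_self_right, hzQ]

lemma hasMinPeriod_replaceMultiples (hz : Periodic z q) (hqQ : q ∣ Q) (hq : 0 < q) (hlt : q < Q)
    (hd : d ≠ z 0) : HasMinPeriod (replaceMultiples z Q d) Q := by
  have hy : Periodic (replaceMultiples z Q d) Q := periodic_replaceMultiples hz hqQ
  have hqQ' : (q : ℤ) ∣ Q := Int.natCast_dvd_natCast.2 hqQ
  have hQq : ¬ (Q : ℤ) ∣ q := fun h ↦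
    hlt.not_ge (Nat.le_of_dvd hq (Int.natCast_dvd_natCast.1 h))
  refine fun e ↦ ⟨fun he ↦ ?_, fun ⟨c, hc⟩ ↦ by rw [hc, mul_comm]; exact hy.int_mul c⟩
  by_contra hQe
  have hze : z e = d := by
    have := he 0
    rwa [zero_add, replaceMultiples_of_not_dvd hQe, replaceMultiples_of_dvd (dvd_zero _)] at this
  have hqe : ¬ (q : ℤ) ∣ e := fun h ↦
    hd (hze.symm.trans (map_eq_map_zero_of_periodic hz h))
  have hQqe : ¬ (Q : ℤ) ∣ q + e := fun h ↦ hqe ((dvd_add_right dvd_rfl).1 (hqQ'.trans h))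
  have hzq : z q = z 0 := hz.eq
  have := he q
  rw [replaceMultiples_of_not_dvd hQqe, replaceMultiples_of_not_dvd hQq, add_comm, hz e, hze,
    hzq] at this
  exact hd this

end ReplaceMultiples

section ModifiedWindows

open Function

variable {A : Type*}

open Classical in
/-- The words of length `L` read across the position `0` in the word `y` with its letter at `0`
replaced by `b`. -/
noncomputable def modifiedWindows (y : ℤ → A) (b : A) (L : ℕ) : Finset (List A) :=
  (Finset.Ioc (-L : ℤ) 0).image (window (update y 0 b) L)

lemma mem_modifiedWindows {y : ℤ → A} {b : A} {L : ℕ} {u : List A} :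
    u ∈ modifiedWindows y b L ↔ ∃ s : ℤ, -L < s ∧ s ≤ 0 ∧ window (update y 0 b) L s = u := by
  simp only [modifiedWindows, Finset.mem_image, Finset.mem_Ioc, and_assoc]

section Periodic

variable {y : ℤ → A} {Q L : ℕ}

lemma window_mem_modifiedWindows (hy : Periodic y Q) (hQ : 0 < Q) (hL : Q ≤ L) (s : ℤ) :
    window y L s ∈ modifiedWindows y (y 0) L := by
  obtain ⟨s', hQs', hs', hss'⟩ := exists_mem_Ico_modEq hQ (-Q + 1 : ℤ) s
  refine mem_modifiedWindows.2 ⟨s', by omega, by omega, ?_⟩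
  rw [update_eq_self, window_congr_of_periodic hy hss']

lemma card_modifiedWindows_self (hy : HasMinPeriod y Q) (hQ : 0 < Q) (hL : Q ≤ L) :
    (modifiedWindows y (y 0) L).card = Q := by
  classical
  have himage : modifiedWindows y (y 0) L = (Finset.Ioc (-Q : ℤ) 0).image (window y L) := by
    ext u
    simp only [mem_modifiedWindows, update_eq_self, Finset.mem_image, Finset.mem_Ioc]
    constructor
    · rintro ⟨s, -, -, rfl⟩
      obtain ⟨s', hQs', hs', hss'⟩ := exists_mem_Ico_modEq hQ (-Q + 1 : ℤ) s
      exact ⟨s', by omega, window_congr_of_periodic hy.periodic hss'⟩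
    · rintro ⟨s, hs, rfl⟩
      exact ⟨s, by omega, by omega, rfl⟩
  rw [himage, Finset.card_image_of_injOn, Int.card_Ioc]
  · simp
  · intro s hs s' hs' h
    rw [Finset.mem_coe, Finset.mem_Ioc] at hs hs'
    have hdvd := ((hy.window_eq_window_iff hQ hL).1 h).dvd
    have := Int.eq_zero_of_abs_lt_dvd hdvd (abs_lt.2 ⟨by omega, by omega⟩)
    omega

-- If the windows agree after a shift by `e`, then `y e = b ≠ y 0`, and from there `y` stays
-- constant along the multiples `j * e` for as long as these avoid the class of `0`; but the
-- multiple `Q * e` lies in that class.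
lemma window_notMem_modifiedWindows (hy : Periodic y Q) (hQ : 0 < Q) (hL : Q ≤ L) {b : A}
    (hb : b ≠ y 0) (s' : ℤ) : window y L s' ∉ modifiedWindows y b L := by
  rw [mem_modifiedWindows]
  rintro ⟨s, hs, hs0, h⟩
  rw [window_eq_window_iff] at h
  generalize s' - s = e at h
  have hmul : ∀ j : ℕ, y ((j + 1 : ℕ) * e) = b := by
    intro j
    induction j with
    | zero => simpa using (h 0 hs0 (by omega)).symm
    | succ j ih =>
      obtain ⟨x, hsx, hxQ, hx⟩ := exists_mem_Ico_modEq hQ s ((j + 1 : ℕ) * e)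
      have hyx : y x = b := (map_eq_of_periodic_of_modEq hy hx).trans ih
      have hx0 : x ≠ 0 := by rintro rfl; exact hb hyx.symm
      have hxe := h x hsx (by omega)
      rw [update_of_ne hx0, hyx] at hxe
      rw [hxe]
      refine (map_eq_of_periodic_of_modEq hy ?_).symm
      rw [Nat.cast_add, Nat.cast_one, add_mul, one_mul]
      exact hx.add_right e
  refine hb ((hmul (Q - 1)).symm.trans ?_)
  rw [Nat.sub_add_cancel hQ]
  exact map_eq_map_zero_of_periodic hy (dvd_mul_right _ _)

end Periodic

end ModifiedWindows

section Coincidences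

open Function

variable {A : Type*} {z : ℤ → A} {q Q L : ℕ} {b b' d : A} {s s' e x : ℤ}

lemma update_replaceMultiples_of_not_dvd (hx : ¬ (Q : ℤ) ∣ x) :
    update (replaceMultiples z Q d) 0 b x = z x := by
  rw [update_of_ne (by rintro rfl; exact hx (dvd_zero _)), replaceMultiples_of_not_dvd hx]

lemma update_replaceMultiples_of_dvd (hx : (Q : ℤ) ∣ x) (hx0 : x ≠ 0) :
    update (replaceMultiples z Q d) 0 b x = d := by
  rw [update_of_ne hx0, replaceMultiples_of_dvd hx]

lemma window_update_replaceMultiples (hs : -(Q : ℤ) < s) (hsL : s + L ≤ Q) :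
    window (update (replaceMultiples z Q d) 0 (z 0)) L s = window z L s := by
  refine window_eq_window_iff.2 fun x hsx hxL ↦ ?_
  rw [sub_self, add_zero]
  obtain rfl | hx0 := eq_or_ne x 0
  · exact update_self ..
  · exact update_replaceMultiples_of_not_dvd fun h ↦
      hx0 (Int.eq_zero_of_abs_lt_dvd h (abs_lt.2 ⟨by omega, by omega⟩))

-- A multiple of `Q` other than `0` carries `d` in the first window, but `b` in the second one.
lemma lt_and_le_of_shift (hz : Periodic z q) (hqQ : q ∣ Q) (hQ : 0 < Q) (hb : b ≠ d) (hs : s ≤ 0)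
    (hsL : 0 < s + L) (hQe : ¬ (Q : ℤ) ∣ e) (hze : z e = b)
    (h : ∀ x, s ≤ x → x < s + L → update (replaceMultiples z Q d) 0 b x =
      update (replaceMultiples z Q d) 0 b' (x + e)) :
    -(Q : ℤ) < s ∧ s + L ≤ Q := by
  have hmul : ∀ t : ℤ, (Q : ℤ) ∣ t → t ≠ 0 → s ≤ t → ¬ t < s + L := by
    intro t hQt ht0 hst htL
    have ht := h t hst htL
    rw [update_replaceMultiples_of_dvd hQt ht0,
      update_replaceMultiples_of_not_dvd fun hdvd ↦ hQe ((dvd_add_right hQt).1 hdvd),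
      map_add_of_periodic_of_dvd hz ((Int.natCast_dvd_natCast.2 hqQ).trans hQt), hze] at ht
    exact hb ht.symm
  constructor
  · by_contra! hc
    exact hmul (-Q) (by simp) (by omega) hc (by omega)
  · by_contra! hc
    exact hmul Q dvd_rfl (by omega) (by omega) hc

lemma eq_apply_zero_of_shift (hz : Periodic z q) (hqQ : q ∣ Q) (hq : 0 < q) (hlt : q < Q)
    (hL : Q < L) (hs : s ≤ 0) (hsL : 0 < s + L) (hze : z e = b)
    (h : ∀ x, s ≤ x → x < s + L → update (replaceMultiples z Q d) 0 b x =
      update (replaceMultiples z Q d) 0 b' (x + e)) :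
    b = z 0 := by
  by_cases hqe : (q : ℤ) ∣ e
  · exact hze.symm.trans (map_eq_map_zero_of_periodic hz hqe)
  have h2q : 2 * q ≤ Q := by
    obtain ⟨r, rfl⟩ := hqQ
    nlinarith [one_lt_of_lt_mul_right hlt]
  -- The first window is longer than `2 * q`, and hence contains `q` or `-q`.
  obtain ⟨t, ht, hst, htL⟩ : ∃ t : ℤ, (t = q ∨ t = -q) ∧ s ≤ t ∧ t < s + L := by
    by_cases hc : (q : ℤ) < s + L
    · exact ⟨q, .inl rfl, by omega, hc⟩
    · exact ⟨-q, .inr rfl, by omega, by omega⟩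
  have hqt : (q : ℤ) ∣ t := by rcases ht with rfl | rfl <;> simp
  have hQt : ¬ (Q : ℤ) ∣ t := fun hdvd ↦ by
    have := Int.eq_zero_of_abs_lt_dvd hdvd (abs_lt.2 ⟨by omega, by omega⟩)
    omega
  have hQte : ¬ (Q : ℤ) ∣ t + e := fun hdvd ↦
    hqe ((dvd_add_right hqt).1 ((Int.natCast_dvd_natCast.2 hqQ).trans hdvd))
  calc b = z e := hze.symm
    _ = z (t + e) := (map_add_of_periodic_of_dvd hz hqt).symm
    _ = update (replaceMultiples z Q d) 0 b' (t + e) :=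
      (update_replaceMultiples_of_not_dvd hQte).symm
    _ = update (replaceMultiples z Q d) 0 b t := (h t hst htL).symm
    _ = z t := update_replaceMultiples_of_not_dvd hQt
    _ = z 0 := map_eq_map_zero_of_periodic hz hqt

lemma eq_and_lt_and_le_of_window_eq (hz : Periodic z q) (hqQ : q ∣ Q) (hq : 0 < q)
    (hlt : q < Q) (hL : Q < L) (hb : b ≠ d) (hs : -(L : ℤ) < s) (hs0 : s ≤ 0) (hss' : s ≠ s')
    (h : window (update (replaceMultiples z Q d) 0 b) L s =
      window (update (replaceMultiples z Q d) 0 b') L s') :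
    b = z 0 ∧ -(Q : ℤ) < s ∧ s + L ≤ Q := by
  rw [window_eq_window_iff] at h
  have hsL : 0 < s + L := by omega
  have h0 := h 0 hs0 hsL
  rw [update_self, zero_add] at h0
  have hQe : ¬ (Q : ℤ) ∣ s' - s := fun hdvd ↦
    hb (h0.trans (update_replaceMultiples_of_dvd hdvd (sub_ne_zero.2 hss'.symm)))
  rw [update_replaceMultiples_of_not_dvd hQe] at h0
  exact ⟨eq_apply_zero_of_shift hz hqQ hq hlt hL hs0 hsL h0.symm h,
    lt_and_le_of_shift hz hqQ (hq.trans hlt) hb hs0 hsL hQe h0.symm h⟩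

end Coincidences

section Counting

open Function

variable {A : Type*} {z : ℤ → A} {q Q L : ℕ} {b b' d : A}

lemma card_modifiedWindows_of_ne (hz : Periodic z q) (hqQ : q ∣ Q) (hq : 0 < q) (hlt : q < Q)
    (hL : Q < L) (hb : b ≠ d) (hbz : b ≠ z 0) :
    (modifiedWindows (replaceMultiples z Q d) b L).card = L := by
  classical
  rw [modifiedWindows, Finset.card_image_of_injOn, Int.card_Ioc]
  · simp
  · intro s hs s' _ h
    rw [Finset.mem_coe, Finset.mem_Ioc] at hs
    by_contra hss'
    exact hbz (eq_and_lt_and_le_of_window_eq hz hqQ hq hlt hL hb hs.1 hs.2 hss' h).1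

lemma modifiedWindows_apply_zero (hz : Periodic z q) (hq : 0 < q) (hlt : q < Q) (hL : Q < L) :
    (modifiedWindows (replaceMultiples z Q d) (z 0) L : Set (List A)) =
      window (update (replaceMultiples z Q d) 0 (z 0)) L ''
        (Finset.Ioc (-L : ℤ) 0 \ Finset.Ioc (-Q + q : ℤ) (Q - L) : Finset ℤ) := by
  ext u
  rw [Finset.mem_coe, mem_modifiedWindows]
  simp only [Set.mem_image, Finset.mem_coe, Finset.mem_sdiff, Finset.mem_Ioc]
  constructor
  · rintro ⟨s, hs, hs0, rfl⟩
    by_cases hsD : -Q + q < s ∧ s ≤ Q - L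
    · obtain ⟨s', hQs', hs'q, hss'⟩ := exists_mem_Ico_modEq hq (-Q + 1 : ℤ) s
      refine ⟨s', by omega, ?_⟩
      rw [window_update_replaceMultiples (by omega) (by omega),
        window_update_replaceMultiples (by omega) (by omega), window_congr_of_periodic hz hss']
    · exact ⟨s, ⟨⟨hs, hs0⟩, hsD⟩, rfl⟩
  · rintro ⟨s, ⟨⟨hs, hs0⟩, -⟩, rfl⟩
    exact ⟨s, hs, hs0, rfl⟩

/- The windows with both ends in `(-Q, Q)` are windows of `z`, and so repeat with period `q`. The
truncated subtraction vanishes when these windows are too few to repeat. -/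
lemma card_modifiedWindows_apply_zero (hz : HasMinPeriod z q) (hqQ : q ∣ Q) (hq : 0 < q)
    (hlt : q < Q) (hL : Q < L) (hd : d ≠ z 0) :
    (modifiedWindows (replaceMultiples z Q d) (z 0) L).card + (2 * Q - q - L) = L := by
  rw [← Set.ncard_coe_finset, modifiedWindows_apply_zero hz.periodic hq hlt hL,
    Set.InjOn.ncard_image, Set.ncard_coe_finset, Finset.card_sdiff_of_subset, Int.card_Ioc,
    Int.card_Ioc]
  · omega
  · exact Finset.Ioc_subset_Ioc (by omega) (by omega)
  · intro s hs s' hs' h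
    simp only [Finset.mem_coe, Finset.mem_sdiff, Finset.mem_Ioc] at hs hs'
    by_contra hss'
    have hbounds := (eq_and_lt_and_le_of_window_eq hz.periodic hqQ hq hlt hL hd.symm hs.1.1
      hs.1.2 hss' h).2
    have hbounds' := (eq_and_lt_and_le_of_window_eq hz.periodic hqQ hq hlt hL hd.symm hs'.1.1
      hs'.1.2 (Ne.symm hss') h.symm).2
    rw [window_update_replaceMultiples hbounds.1 hbounds.2,
      window_update_replaceMultiples hbounds'.1 hbounds'.2,
      hz.window_eq_window_iff hq (by omega)] at h
    have := Int.eq_zero_of_abs_lt_dvd h.dvd (abs_lt.2 ⟨by omega, by omega⟩)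
    omega

lemma disjoint_modifiedWindows_replaceMultiples (hz : Periodic z q) (hqQ : q ∣ Q) (hq : 0 < q)
    (hlt : q < Q) (hL : Q < L) (hb : b ≠ d) (hbb' : b ≠ b') :
    Disjoint (modifiedWindows (replaceMultiples z Q d) b L)
      (modifiedWindows (replaceMultiples z Q d) b' L) := by
  have hy : replaceMultiples z Q d 0 = d := replaceMultiples_of_dvd (dvd_zero _)
  rw [Finset.disjoint_right]
  intro u hu' hu
  obtain ⟨s', hs', hs0', rfl⟩ := mem_modifiedWindows.1 hu'
  obtain rfl | hb' := eq_or_ne b' d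
  · rw [update_eq_self_iff.2 hy.symm] at hu
    exact window_notMem_modifiedWindows (periodic_replaceMultiples hz hqQ) (by omega) hL.le
      (hb.trans_eq hy.symm) s' hu
  · obtain ⟨s, hs, hs0, h⟩ := mem_modifiedWindows.1 hu
    obtain rfl | hss' := eq_or_ne s s'
    · have h0 := window_eq_window_iff.1 h 0 hs0 (by omega)
      rw [sub_self, add_zero, update_self, update_self] at h0
      exact hbb' h0
    · exact hbb' ((eq_and_lt_and_le_of_window_eq hz hqQ hq hlt hL hb hs hs0 hss' h).1.trans
        (eq_and_lt_and_le_of_window_eq hz hqQ hq hlt hL hb' hs' hs0' hss'.symm h.symm).1.symm)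

lemma card_biUnion_modifiedWindows [DecidableEq (List A)] (hz : HasMinPeriod z q) (hqQ : q ∣ Q)
    (hq : 0 < q) (hlt : q < Q) (hL : Q < L) (hd : d ≠ z 0) {E : Finset A} (hdE : d ∈ E)
    (hzE : z 0 ∈ E) :
    (E.biUnion fun b ↦ modifiedWindows (replaceMultiples z Q d) b L).card + (2 * Q - q - L) =
      Q + (E.card - 1) * L := by
  classical
  set N : A → ℕ := fun b ↦ (modifiedWindows (replaceMultiples z Q d) b L).card
  have hNd : N d = Q := by
    have h := card_modifiedWindows_self
      (hasMinPeriod_replaceMultiples hz.periodic hqQ hq hlt hd) (by omega) hL.le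
    rwa [replaceMultiples_of_dvd (dvd_zero _)] at h
  have hNz : N (z 0) + (2 * Q - q - L) = L := card_modifiedWindows_apply_zero hz hqQ hq hlt hL hd
  have hNb : ∀ b ∈ (E.erase d).erase (z 0), N b = L := fun b hb ↦
    card_modifiedWindows_of_ne hz.periodic hqQ hq hlt hL
      (Finset.ne_of_mem_erase (Finset.mem_of_mem_erase hb)) (Finset.ne_of_mem_erase hb)
  have hzEd : z 0 ∈ E.erase d := Finset.mem_erase.2 ⟨hd.symm, hzE⟩
  rw [Finset.card_biUnion]
  · calc ∑ b ∈ E, N b + (2 * Q - q - L)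
        = N d + (N (z 0) + (2 * Q - q - L)) + ∑ b ∈ (E.erase d).erase (z 0), N b := by
          rw [← Finset.add_sum_erase E N hdE, ← Finset.add_sum_erase _ N hzEd]
          ring
      _ = Q + (L + ((E.erase d).erase (z 0)).card * L) := by
          rw [hNd, hNz, Finset.sum_const_nat hNb, add_assoc]
      _ = Q + (E.card - 1) * L := by
          rw [← Finset.card_erase_of_mem hdE, ← Finset.card_erase_add_one hzEd]
          ring
  · intro b _ b' _ hbb'
    obtain rfl | hb := eq_or_ne b d
    · exact (disjoint_modifiedWindows_replaceMultiples hz.periodic hqQ hq hlt hL hbb'.symm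
        hbb'.symm).symm
    · exact disjoint_modifiedWindows_replaceMultiples hz.periodic hqQ hq hlt hL hb hbb'

end Counting

section Toeplitz

open Function

variable {A : Type*} {a : ℕ → A} {n : ℕ → ℕ} {i j k m L : ℕ} {s t x : ℤ}

/-- The period `n 0 * ⋯ * n (j - 1)` of the Toeplitz word `periodicSeq a n j`. In the notation of
the paper this is `|p (j - 1)| + 1`. -/
def blockPeriod (n : ℕ → ℕ) (j : ℕ) : ℕ := ∏ i ∈ Finset.range j, n i

lemma blockPeriod_succ (n : ℕ → ℕ) (j : ℕ) : blockPeriod n (j + 1) = blockPeriod n j * n j :=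
  Finset.prod_range_succ ..

lemma blockPeriod_pos (hn : ∀ k, 2 ≤ n k) (j : ℕ) : 0 < blockPeriod n j :=
  Finset.prod_pos fun i _ ↦ two_pos.trans_le (hn i)

lemma blockPeriod_strictMono (hn : ∀ k, 2 ≤ n k) : StrictMono (blockPeriod n) :=
  strictMono_nat_of_lt_succ fun j ↦ by
    rw [blockPeriod_succ]
    exact lt_mul_of_one_lt_right (blockPeriod_pos hn j) (hn j)

lemma blockPeriod_dvd_of_le (h : i ≤ j) : blockPeriod n i ∣ blockPeriod n j :=
  Finset.prod_dvd_prod_of_subset _ _ _ (Finset.range_subset_range.2 h)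

/-- The bi-infinite periodic word `⋯ p (j - 1) (a j) p (j - 1) (a j) ⋯`, aligned so that the letters
`a j` stand at the multiples of its period `blockPeriod n j`. -/
def periodicSeq (a : ℕ → A) (n : ℕ → ℕ) : ℕ → ℤ → A
  | 0 => fun _ ↦ a 0
  | j + 1 => replaceMultiples (periodicSeq a n j) (blockPeriod n (j + 1)) (a (j + 1))

lemma periodicSeq_of_dvd (hx : (blockPeriod n j : ℤ) ∣ x) : periodicSeq a n j x = a j := by
  cases j with
  | zero => rfl
  | succ j => exact replaceMultiples_of_dvd hx

lemma periodicSeq_apply_zero : periodicSeq a n j 0 = a j := periodicSeq_of_dvd (dvd_zero _)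

lemma hasMinPeriod_periodicSeq (hn : ∀ k, 2 ≤ n k) (ha : ∀ k, a k ≠ a (k + 1)) (j : ℕ) :
    HasMinPeriod (periodicSeq a n j) (blockPeriod n j) := by
  induction j with
  | zero => exact hasMinPeriod_const (a 0)
  | succ j ih =>
    exact hasMinPeriod_replaceMultiples ih.periodic (blockPeriod_dvd_of_le j.le_succ)
      (blockPeriod_pos hn j) (blockPeriod_strictMono hn j.lt_succ_self)
      (by rw [periodicSeq_apply_zero]; exact (ha j).symm)

lemma periodic_periodicSeq (a : ℕ → A) (n : ℕ → ℕ) (j : ℕ) :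
    Periodic (periodicSeq a n j) (blockPeriod n j) := by
  induction j with
  | zero => exact fun _ ↦ rfl
  | succ j ih => exact periodic_replaceMultiples ih (blockPeriod_dvd_of_le j.le_succ)

lemma periodicSeq_eq_of_le_of_not_dvd (hkj : k ≤ j) (hx : ¬ (blockPeriod n (k + 1) : ℤ) ∣ x) :
    periodicSeq a n j x = periodicSeq a n k x := by
  induction j, hkj using Nat.le_induction with
  | base => rfl
  | succ j hkj ih =>
    rw [periodicSeq, replaceMultiples_of_not_dvd, ih]
    exact fun h ↦ hx ((Int.natCast_dvd_natCast.2 (blockPeriod_dvd_of_le (by omega))).trans h)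

lemma periodicSeq_mem_Ak (hkj : k ≤ j) (hx : (blockPeriod n k : ℤ) ∣ x) :
    periodicSeq a n j x ∈ Ak a k := by
  induction j, hkj using Nat.le_induction with
  | base => exact ⟨k, le_rfl, (periodicSeq_of_dvd hx).symm⟩
  | succ j hkj ih =>
    by_cases h : (blockPeriod n (j + 1) : ℤ) ∣ x
    · exact ⟨j + 1, by omega, (periodicSeq_of_dvd h).symm⟩
    · rwa [periodicSeq, replaceMultiples_of_not_dvd h]

lemma window_periodicSeq_of_dvd {N : ℕ} (hN : 0 < N) (h : blockPeriod n j ∣ N) :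
    window (periodicSeq a n j) N 1 = window (periodicSeq a n j) (N - 1) 1 ++ [a j] := by
  obtain ⟨r, rfl⟩ := Nat.exists_eq_add_one.2 hN
  have haj : periodicSeq a n j (1 + r) = a j :=
    periodicSeq_of_dvd (by rw [add_comm]; exact_mod_cast h)
  rw [window_add, Nat.add_sub_cancel]
  simp [window, haj]

lemma window_periodicSeq_succ (a : ℕ → A) (n : ℕ → ℕ) (j : ℕ) :
    window (periodicSeq a n (j + 1)) (blockPeriod n (j + 1) - 1) 1 =
      window (periodicSeq a n j) (blockPeriod n (j + 1) - 1) 1 := by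
  refine window_eq_window_iff.2 fun x hx hxQ ↦ ?_
  rw [sub_self, add_zero]
  refine periodicSeq_eq_of_le_of_not_dvd j.le_succ fun h ↦ ?_
  have := Int.le_of_dvd (by omega) h
  omega

lemma toeplitzBlock_eq_window (hn : ∀ k, 2 ≤ n k) (j : ℕ) :
    ToeplitzBlock a n j = window (periodicSeq a n j) (blockPeriod n (j + 1) - 1) 1 := by
  induction j with
  | zero => simp [ToeplitzBlock, window, periodicSeq, blockPeriod, List.ofFn_const]
  | succ j ih =>
    obtain ⟨r, hr⟩ : ∃ r, n (j + 1) = r + 1 := Nat.exists_eq_add_one.2 (two_pos.trans_le (hn _))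
    refine List.append_cancel_right (bs := [a (j + 1)]) ?_
    calc ToeplitzBlock a n (j + 1) ++ [a (j + 1)]
        = (List.replicate (n (j + 1)) (ToeplitzBlock a n j ++ [a (j + 1)])).flatten := by
          rw [ToeplitzBlock, hr, intercalate_replicate_append]
      _ = (List.replicate (n (j + 1))
            (window (periodicSeq a n (j + 1)) (blockPeriod n (j + 1)) 1)).flatten := by
          rw [ih, ← window_periodicSeq_succ,
            ← window_periodicSeq_of_dvd (blockPeriod_pos hn _) dvd_rfl]
      _ = window (periodicSeq a n (j + 1)) (blockPeriod n (j + 2)) 1 := by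
          rw [← window_mul_of_periodic (periodic_periodicSeq a n _), mul_comm, ← blockPeriod_succ]
      _ = window (periodicSeq a n (j + 1)) (blockPeriod n (j + 2) - 1) 1 ++ [a (j + 1)] :=
          window_periodicSeq_of_dvd (blockPeriod_pos hn _)
            (blockPeriod_dvd_of_le (j + 1).le_succ)

lemma lenPrev_add_one (hn : ∀ k, 2 ≤ n k) (j : ℕ) : lenPrev a n j + 1 = blockPeriod n j := by
  cases j with
  | zero => rfl
  | succ j =>
    rw [lenPrev, toeplitzBlock_eq_window hn, length_window,
      Nat.sub_add_cancel (blockPeriod_pos hn _)]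

lemma window_periodicSeq_eq_window_update (hkj : k ≤ j) (ht : (blockPeriod n (k + 1) : ℤ) ∣ t)
    (hL : L ≤ blockPeriod n (k + 1)) (hs : -(L : ℤ) < s) (hs0 : s ≤ 0) :
    window (periodicSeq a n j) L (t + s) =
      window (update (periodicSeq a n k) 0 (periodicSeq a n j t)) L s := by
  refine window_eq_window_iff.2 fun x htx hxL ↦ ?_
  obtain rfl | hxt := eq_or_ne x t
  · rw [show x + (s - (x + s)) = 0 by ring, update_self]
  have hx : ¬ (blockPeriod n (k + 1) : ℤ) ∣ x := fun h ↦
    sub_ne_zero.2 hxt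
      (Int.eq_zero_of_abs_lt_dvd (h.sub ht) (abs_lt.2 ⟨by omega, by omega⟩))
  have htk : (blockPeriod n k : ℤ) ∣ t :=
    (Int.natCast_dvd_natCast.2 (blockPeriod_dvd_of_le k.le_succ)).trans ht
  calc periodicSeq a n j x
      = periodicSeq a n k (t + (x - t)) := by
        rw [add_sub_cancel, periodicSeq_eq_of_le_of_not_dvd hkj hx]
    _ = periodicSeq a n k (x - t) := map_add_of_periodic_of_dvd (periodic_periodicSeq a n k) htk
    _ = update (periodicSeq a n k) 0 (periodicSeq a n j t) (x + (s - (t + s))) := by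
        rw [sub_add_cancel_right, ← sub_eq_add_neg, update_of_ne (sub_ne_zero.2 hxt)]

lemma exists_mem_modifiedWindows_of_mem_toeplitzLang (hn : ∀ k, 2 ≤ n k)
    (hk : a k ∈ Ak a (k + 1)) {u : List A} (hku : blockPeriod n k ≤ u.length)
    (huk : u.length ≤ blockPeriod n (k + 1)) (hu : u ∈ ToeplitzLang a n) :
    ∃ b ∈ Ak a (k + 1), u ∈ modifiedWindows (periodicSeq a n k) b u.length := by
  obtain ⟨j, hj⟩ := hu
  rw [toeplitzBlock_eq_window hn, infix_window_iff] at hj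
  obtain ⟨s, hs1, hsj, hu⟩ := hj
  have hpos : 0 < blockPeriod n k := blockPeriod_pos hn k
  have hlt : blockPeriod n k < blockPeriod n (j + 1) := by omega
  have hkj : k ≤ j := Nat.lt_add_one_iff.1 ((blockPeriod_strictMono hn).lt_iff_lt.1 hlt)
  by_cases h : ∃ t : ℤ, (blockPeriod n (k + 1) : ℤ) ∣ t ∧ s ≤ t ∧ t < s + u.length
  · obtain ⟨t, ht, hst, htu⟩ := h
    refine ⟨periodicSeq a n j t, ?_, mem_modifiedWindows.2 ⟨s - t, by omega, by omega, ?_⟩⟩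
    · obtain rfl | hkj' := hkj.eq_or_lt
      · rwa [periodicSeq_of_dvd
          ((Int.natCast_dvd_natCast.2 (blockPeriod_dvd_of_le k.le_succ)).trans ht)]
      · exact periodicSeq_mem_Ak hkj' ht
    · rw [← window_periodicSeq_eq_window_update hkj ht huk (by omega) (by omega), add_sub_cancel,
        ← hu]
  · have hwindow : u = window (periodicSeq a n k) u.length s := by
      refine hu.trans (window_eq_window_iff.2 fun x hsx hxu ↦ ?_)
      rw [sub_self, add_zero]
      exact periodicSeq_eq_of_le_of_not_dvd hkj fun hx ↦ h ⟨x, hx, hsx, hxu⟩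
    have hmem := window_mem_modifiedWindows (periodic_periodicSeq a n k) hpos hku s
    rw [← hwindow, periodicSeq_apply_zero] at hmem
    exact ⟨a k, hk, hmem⟩

lemma mem_toeplitzLang_of_mem_modifiedWindows (hn : ∀ k, 2 ≤ n k)
    (hL : L ≤ blockPeriod n (k + 1)) {b : A} (hb : b ∈ Ak a (k + 1)) {u : List A}
    (hu : u ∈ modifiedWindows (periodicSeq a n k) b L) : u ∈ ToeplitzLang a n := by
  obtain ⟨j, hkj, rfl⟩ := hb
  obtain ⟨s, hs, hs0, rfl⟩ := mem_modifiedWindows.1 hu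
  have hLj : L ≤ blockPeriod n j := hL.trans ((blockPeriod_strictMono hn).monotone hkj)
  have hj2 : 2 * blockPeriod n j ≤ blockPeriod n (j + 1) := by
    rw [blockPeriod_succ, mul_comm]
    exact Nat.mul_le_mul_left _ (hn j)
  have hwindow := window_periodicSeq_eq_window_update (a := a) (k.le_succ.trans hkj)
    (Int.natCast_dvd_natCast.2 (blockPeriod_dvd_of_le (n := n) hkj)) hL hs hs0
  rw [periodicSeq_of_dvd dvd_rfl] at hwindow
  refine ⟨j, ?_⟩
  rw [← hwindow, toeplitzBlock_eq_window hn, infix_window_iff, length_window]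
  exact ⟨_, by omega, by omega, rfl⟩

lemma mem_toeplitzLang_iff (hn : ∀ k, 2 ≤ n k) (hk : a k ∈ Ak a (k + 1))
    (hkL : blockPeriod n k ≤ L) (hLk : L ≤ blockPeriod n (k + 1)) {u : List A} :
    u ∈ ToeplitzLang a n ∧ u.length = L ↔
      ∃ b ∈ Ak a (k + 1), u ∈ modifiedWindows (periodicSeq a n k) b L := by
  constructor
  · rintro ⟨hu, rfl⟩
    exact exists_mem_modifiedWindows_of_mem_toeplitzLang hn hk hkL hLk hu
  · rintro ⟨b, hb, hu⟩
    refine ⟨mem_toeplitzLang_of_mem_modifiedWindows hn hLk hb hu, ?_⟩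
    obtain ⟨s, -, -, rfl⟩ := mem_modifiedWindows.1 hu
    exact length_window ..

lemma cmpl_add_eq (hn : ∀ k, 2 ≤ n k) (ha : ∀ k, a k ≠ a (k + 1))
    (hfin : (Ak a (m + 2)).Finite) (hm : a m ∈ Ak a (m + 2)) (hm1 : a (m + 1) ∈ Ak a (m + 2))
    (hL : blockPeriod n (m + 1) < L) (hL' : L ≤ blockPeriod n (m + 2)) :
    cmpl a n L + (2 * blockPeriod n (m + 1) - blockPeriod n m - L) =
      blockPeriod n (m + 1) + ((Ak a (m + 2)).ncard - 1) * L := by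
  classical
  have hset : {u | u ∈ ToeplitzLang a n ∧ u.length = L} =
      (hfin.toFinset.biUnion fun b ↦ modifiedWindows (periodicSeq a n (m + 1)) b L : Finset _) := by
    ext u
    simp only [Set.mem_ofPred_eq, mem_toeplitzLang_iff hn hm1 hL.le hL', Finset.mem_coe,
      Finset.mem_biUnion, Set.Finite.mem_toFinset]
  have hz : periodicSeq a n m 0 = a m := periodicSeq_apply_zero
  rw [cmpl, hset, Set.ncard_coe_finset, Set.ncard_eq_toFinset_card _ hfin, periodicSeq]
  exact card_biUnion_modifiedWindows (hasMinPeriod_periodicSeq hn ha m)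
    (blockPeriod_dvd_of_le m.le_succ) (blockPeriod_pos hn m)
    (blockPeriod_strictMono hn m.lt_succ_self) hL (hz ▸ (ha m).symm)
    (hfin.mem_toFinset.2 hm1) (hfin.mem_toFinset.2 (hz.symm ▸ hm))

end Toeplitz

theorem stmt10_general {A : Type*} (a : ℕ → A) (n : ℕ → ℕ) (hn : ∀ k, 2 ≤ n k)
    (ha : ∀ k, a k ≠ a (k + 1)) (m : ℕ) (hfin : (Ak a (m + 2)).Finite)
    (hA : Ak a m ⊆ Ak a (m + 2)) (L : ℕ)
    (hL1 : lenPrev a n (m + 1) + 2 ≤ L) (hL2 : L ≤ (ToeplitzBlock a n (m + 1)).length + 1) :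
    (L + lenPrev a n m ≤ 2 * lenPrev a n (m + 1) + 1 →
      (cmpl a n L : ℤ) =
        ((Ak a (m + 2)).ncard : ℤ) * L - lenPrev a n (m + 1) + lenPrev a n m) ∧
    (2 * lenPrev a n (m + 1) + 2 ≤ L + lenPrev a n m →
      (cmpl a n L : ℤ) =
        (((Ak a (m + 2)).ncard : ℤ) - 1) * L + lenPrev a n (m + 1) + 1) := by
  have hq : lenPrev a n m + 1 = blockPeriod n m := lenPrev_add_one hn m
  have hQ : lenPrev a n (m + 1) + 1 = blockPeriod n (m + 1) := lenPrev_add_one hn (m + 1)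
  have hm : a m ∈ Ak a (m + 2) := hA ⟨m, le_rfl, rfl⟩
  have hm1 : a (m + 1) ∈ Ak a (m + 2) := hA ⟨m + 1, m.le_succ, rfl⟩
  have hcount := cmpl_add_eq hn ha hfin hm hm1 (by omega)
    (hL2.trans_eq (lenPrev_add_one hn (m + 2)))
  have hpos : 0 < (Ak a (m + 2)).ncard := (Set.ncard_pos hfin).2 ⟨_, hm⟩
  obtain ⟨c, hc⟩ := Nat.exists_eq_add_one.2 hpos
  rw [hc, Nat.add_sub_cancel] at hcount
  rw [hc]
  push_cast
  rw [add_sub_cancel_right, add_one_mul]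
  zify at hcount
  constructor <;> intro h <;> lia

/-- the complexity function for `k ≥ N0 + 1` on the range
`|p (k-1)| + 2 ≤ L ≤ |p k| + 1`. -/
theorem stmt10 {A : Type*} [Fintype A] [Nonempty A]
    (a : ℕ → A) (n : ℕ → ℕ) (hn : ∀ k, 2 ≤ n k) (ha : ∀ k, a k ≠ a (k + 1))
    (hAev : 2 ≤ (Aev a).ncard)
    (N0 : ℕ) (hN0 : IsLeast {N | ∀ k, N ≤ k → Ak a k = Aev a} N0)
    (k : ℕ) (hk : N0 + 1 ≤ k) (L : ℕ)
    (hL1 : lenPrev a n k + 2 ≤ L) (hL2 : L ≤ (ToeplitzBlock a n k).length + 1) :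
    (L + lenPrev a n (k - 1) ≤ 2 * lenPrev a n k + 1 →
      (cmpl a n L : ℤ) =
        ((Aev a).ncard : ℤ) * (L : ℤ) - (lenPrev a n k : ℤ) + (lenPrev a n (k - 1) : ℤ)) ∧
    (2 * lenPrev a n k + 2 ≤ L + lenPrev a n (k - 1) →
      (cmpl a n L : ℤ) =
        (((Aev a).ncard : ℤ) - 1) * (L : ℤ) + (lenPrev a n k : ℤ) + 1) := by
  obtain ⟨m, rfl⟩ : ∃ m, k = m + 1 := ⟨k - 1, by omega⟩
  have hAk : ∀ j, N0 ≤ j → Ak a j = Aev a := hN0.1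
  rw [← hAk (m + 2) (by omega)]
  exact stmt10_general a n hn ha m (Set.toFinite _)
    ((hAk m (by omega)).trans (hAk (m + 2) (by omega)).symm).subset L hL1 hL2
end
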